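/- Let A₀ = {x ∈ S³ : x₄ = 0 and -1/2 ≤ x₃ ≤ 1/2} be the standard unknotted annulus in the 3-sphere S³, lying in the equatorial 2-sphere {x₄ = 0}, with boundary the two round circles {x ∈ S³ : x₄ = 0, x₃ = 1/2} and {x ∈ S³ : x₄ = 0, x₃ = -1/2}. If A' is any smoothly embedded annulus in S³ whose boundary equals ∂A₀ (the union of these two circles), then there is a smooth ambient isotopy of S³ sending A₀ to A'. -/

import Mathlib

open Metric Manifold Set

noncomputable section

/-- The 3-sphere: the unit sphere in `EuclideanSpace ℝ (Fin 4)`. -/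
abbrev S3 : Type := Metric.sphere (0 : EuclideanSpace ℝ (Fin 4)) 1

/-- A smooth ambient isotopy of the 3-sphere: a smooth map
`h : [0,1] × S³ → S³` with `h 0 = id` and `h λ` a diffeomorphism for every `λ`. -/
structure AmbientIsotopy where
  toFun : Set.Icc (0:ℝ) 1 → S3 → S3
  smooth : ContMDiff ((𝓡∂ 1).prod (𝓡 3)) (𝓡 3) (⊤ : ℕ∞)
    (fun p : Set.Icc (0:ℝ) 1 × S3 => toFun p.1 p.2)
  init : ∀ x, toFun 0 x = x
  diffeo : ∀ lam, ∃ d : Diffeomorph (𝓡 3) (𝓡 3) S3 S3 (⊤ : ℕ∞), ∀ x, toFun lam x = d x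

/-- The ambient isotopy `h` sends the subset `X` of `S³` to the subset `Y`. -/
def AmbientIsotopy.Sends (h : AmbientIsotopy) (X Y : Set S3) : Prop :=
  h.toFun 1 '' X = Y

open Real in
/-- A smoothly embedded annulus in `S³`: a smooth immersion `F : ℝ × [0,1] → S³` with
`F (s + 2π, y) = F (s, y)`, descending to a topological embedding of the quotient
cylinder `(ℝ × [0,1]) / ((s,y) ~ (s+2π,y))` (equivalently, by compactness of the
cylinder, the descended map is injective). -/
structure EmbeddedAnnulus where
  F : ℝ × ℝ → S3
  smooth : ContMDiff 𝓘(ℝ, ℝ × ℝ) (𝓡 3) (⊤ : ℕ∞) F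
  periodic : ∀ s y : ℝ, F (s + 2 * π, y) = F (s, y)
  immersion : ∀ p : ℝ × ℝ, p.2 ∈ Set.Icc (0:ℝ) 1 →
    Function.Injective (mfderiv 𝓘(ℝ, ℝ × ℝ) (𝓡 3) F p)
  inj : ∀ s s' y y' : ℝ, y ∈ Set.Icc (0:ℝ) 1 → y' ∈ Set.Icc (0:ℝ) 1 →
    (F (s, y) = F (s', y') ↔ (y = y' ∧ ∃ k : ℤ, s' = s + 2 * π * k))

/-- The embedded annulus as a subset of `S³`. -/
def EmbeddedAnnulus.carrier (A : EmbeddedAnnulus) : Set S3 :=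
  A.F '' (Set.univ ×ˢ Set.Icc 0 1)

/-- The boundary of an embedded annulus: the image of the two boundary circles. -/
def EmbeddedAnnulus.bdry (A : EmbeddedAnnulus) : Set S3 :=
  A.F '' (Set.univ ×ˢ ({0, 1} : Set ℝ))

/-- The standard unknotted annulus
`A₀ = {x ∈ S³ : x₄ = 0 ∧ -1/2 ≤ x₃ ≤ 1/2}`, lying in the equatorial 2-sphere
`{x₄ = 0}`. (Coordinates `x₁, x₂, x₃, x₄` are indexed by `0, 1, 2, 3`.) -/
def stdAnnulus : Set S3 :=
  {x : S3 | (x : EuclideanSpace ℝ (Fin 4)) 3 = 0 ∧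
    (x : EuclideanSpace ℝ (Fin 4)) 2 ∈ Set.Icc (-(1:ℝ)/2) (1/2)}

/-- The boundary of the standard annulus: the two round circles
`{x ∈ S³ : x₄ = 0, x₃ = 1/2}` and `{x ∈ S³ : x₄ = 0, x₃ = -1/2}`. -/
def stdAnnulusBdry : Set S3 :=
  {x : S3 | (x : EuclideanSpace ℝ (Fin 4)) 3 = 0 ∧
    ((x : EuclideanSpace ℝ (Fin 4)) 2 = 1/2 ∨
      (x : EuclideanSpace ℝ (Fin 4)) 2 = -(1/2))}

/-!
Let `f (s, y)` parametrize the annulus, with `f (·, 0)` running along the circle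
`C = {x₃ = 1 / 2, x₄ = 0}`. The last two coordinates are a framing of the normal bundle of `C`, and
the slope `(f (s, y) - f (s, 0)) / y`, extended by `∂f/∂y` to `y = 0`, has a nonzero normal part for
every `y ∈ [0, 1]`: for `y > 0` because `f (s, y)` is a point of `S³` off `C`, and for `y = 0`
because `f` is an immersion. At `y = 1` the normal part is `(-1, 0)`. So the slope itself is a
homotopy untwisting the normal direction in which the annulus leaves `C`. Shrinking the annulus to
a thin collar of `C` and turning this collar along the homotopy yields an isotopy of embedded annuli
to a thin band which depends on `C` alone. The standard annulus is isotopic to the same band, and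
isotopies of embedded annuli extend to ambient isotopies.
-/

open scoped ContDiff Topology
open Function Filter

/-! ### Ambient isotopy as an equivalence relation -/

/-- The Euclidean space `ℝ⁴` in which `S³` is the unit sphere. -/
abbrev E4 : Type := EuclideanSpace ℝ (Fin 4)

instance fact_finrank_E4 : Fact (Module.finrank ℝ E4 = 3 + 1) := ⟨finrank_euclideanSpace_fin⟩

instance isManifold_S3 : IsManifold (𝓡 3) ∞ S3 :=
  haveI : IsManifold (𝓡 3) ω S3 := EuclideanSpace.instIsManifoldSphere
  IsManifold.of_le (n := ω) le_top

/-- Two subsets of `S³` are ambient isotopic if some smooth ambient isotopy sends the first to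
the second. -/
def AmbientIsotopic (X Y : Set S3) : Prop := ∃ h : AmbientIsotopy, h.Sends X Y

theorem AmbientIsotopic.trans {X Y Z : Set S3} (hXY : AmbientIsotopic X Y)
    (hYZ : AmbientIsotopic Y Z) : AmbientIsotopic X Z := by
  obtain ⟨f, rfl⟩ := hXY
  obtain ⟨g, rfl⟩ := hYZ
  refine ⟨⟨fun l x => g.toFun l (f.toFun l x), ?_, fun x => by rw [f.init, g.init], fun l => ?_⟩,
    image_comp (g.toFun 1) (f.toFun 1) X⟩
  · exact g.smooth.comp (contMDiff_fst.prodMk f.smooth)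
  · obtain ⟨d, hd⟩ := f.diffeo l
    obtain ⟨e, he⟩ := g.diffeo l
    exact ⟨d.trans e, fun x => by rw [he, hd]; rfl⟩

theorem contMDiff_unitInterval_symm : ContMDiff (𝓡∂ 1) (𝓡∂ 1) ∞ unitInterval.symm := by
  have hsub : ContMDiff (𝓡∂ 1) 𝓘(ℝ, ℝ) ∞ (fun x : Icc (0 : ℝ) 1 => 1 - (x : ℝ)) :=
    contMDiff_const.sub contMDiff_subtypeVal_Icc
  have hmem : ∀ x : Icc (0 : ℝ) 1, 1 - (x : ℝ) ∈ Icc (0 : ℝ) 1 := fun x => (unitInterval.symm x).2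
  have hproj : ContMDiffOn 𝓘(ℝ, ℝ) (𝓡∂ 1) ∞ (projIcc (0 : ℝ) 1 zero_le_one) (Icc 0 1) :=
    contMDiffOn_projIcc
  refine (hproj.comp_contMDiff hsub hmem).congr fun x => ?_
  exact (projIcc_of_mem zero_le_one (hmem x)).symm

theorem AmbientIsotopic.symm {X Y : Set S3} (h : AmbientIsotopic X Y) : AmbientIsotopic Y X := by
  obtain ⟨f, rfl⟩ := h
  obtain ⟨d, hd⟩ := f.diffeo 1
  refine ⟨⟨fun l x => f.toFun (unitInterval.symm l) (d.symm x), ?_, fun x => ?_, fun l => ?_⟩, ?_⟩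
  · exact f.smooth.comp ((contMDiff_unitInterval_symm.comp contMDiff_fst).prodMk
      (d.symm.contMDiff.comp contMDiff_snd))
  · rw [unitInterval.symm_zero, hd, d.apply_symm_apply]
  · obtain ⟨e, he⟩ := f.diffeo (unitInterval.symm l)
    exact ⟨d.symm.trans e, fun x => by rw [he]; rfl⟩
  · simp only [AmbientIsotopy.Sends, unitInterval.symm_one, f.init, image_image, hd,
      d.symm_apply_apply, image_id']

/-! ### Diffeomorphisms close to the identity -/

section NearIdentity

variable {E : Type*} [NormedAddCommGroup E] [NormedSpace ℝ E] [CompleteSpace E]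

theorem exists_homeomorph_of_norm_fderiv_sub_id_le {n : WithTop ℕ∞} (hn : n ≠ 0) {Q : E → E}
    (hQ : ContDiff ℝ n Q) {c : NNReal} (hc : c < 1)
    (hQc : ∀ x, ‖fderiv ℝ Q x - ContinuousLinearMap.id ℝ E‖ ≤ c) :
    ∃ e : E ≃ₜ E, ⇑e = Q ∧ ContDiff ℝ n e.symm := by
  have hdiff : Differentiable ℝ Q := hQ.differentiable hn
  have happrox : ApproximatesLinearOn Q (ContinuousLinearEquiv.refl ℝ E : E →L[ℝ] E) univ c := by
    rw [ApproximatesLinearOn.approximatesLinearOn_iff_lipschitzOnWith]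
    refine convex_univ.lipschitzOnWith_of_nnnorm_hasFDerivWithin_le
      (fun x _ => ((hdiff x).hasFDerivAt.sub
        (ContinuousLinearEquiv.refl ℝ E : E →L[ℝ] E).hasFDerivAt).hasFDerivWithinAt)
      fun x _ => hQc x
  have hsmall : Subsingleton E ∨
      c < ‖((ContinuousLinearEquiv.refl ℝ E).symm : E →L[ℝ] E)‖₊⁻¹ := by
    refine (subsingleton_or_nontrivial E).imp_right fun (_ : Nontrivial E) => ?_
    have hid : ‖((ContinuousLinearEquiv.refl ℝ E).symm : E →L[ℝ] E)‖₊ = 1 :=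
      ContinuousLinearMap.nnnorm_id
    rwa [hid, inv_one]
  refine ⟨happrox.toHomeomorph Q hsmall, rfl, contDiff_iff_contDiffAt.2 fun y => ?_⟩
  set e := happrox.toHomeomorph Q hsmall
  have hunit : ‖1 - fderiv ℝ Q (e.symm y)‖ < 1 := by
    rw [norm_sub_rev]
    exact (hQc _).trans_lt (by exact_mod_cast hc)
  let e' : E ≃L[ℝ] E := ContinuousLinearEquiv.unitsEquiv ℝ E (Units.oneSub _ hunit)
  have he' : (e' : E →L[ℝ] E) = fderiv ℝ Q (e.symm y) := by
    ext v
    change (1 - (1 - fderiv ℝ Q (e.symm y))) v = _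
    rw [sub_sub_cancel]
  exact e.toOpenPartialHomeomorph.contDiffAt_symm (mem_univ y)
    (he' ▸ (hdiff _).hasFDerivAt) hQ.contDiffAt

end NearIdentity

section SphereDiffeomorph

variable {E : Type*} [NormedAddCommGroup E] [InnerProductSpace ℝ E] {n : ℕ}
  [Fact (Module.finrank ℝ E = n + 1)]

theorem exists_sphere_diffeomorph_of_norm_map {m : WithTop ℕ∞} (e : E ≃ₜ E)
    (he : ContDiff ℝ m e) (he' : ContDiff ℝ m e.symm) (hnorm : ∀ x, ‖e x‖ = ‖x‖) :
    ∃ d : Diffeomorph (𝓡 n) (𝓡 n) (sphere (0 : E) 1) (sphere (0 : E) 1) m,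
      ∀ x, (d x : E) = e x := by
  have hmaps : ∀ x : sphere (0 : E) 1, e x ∈ sphere (0 : E) 1 := fun x => by
    rw [mem_sphere_zero_iff_norm, hnorm, norm_eq_of_mem_sphere]
  have hmaps' : ∀ x : sphere (0 : E) 1, e.symm x ∈ sphere (0 : E) 1 := fun x => by
    rw [mem_sphere_zero_iff_norm, ← hnorm, e.apply_symm_apply, norm_eq_of_mem_sphere]
  let d : sphere (0 : E) 1 ≃ sphere (0 : E) 1 :=
    { toFun x := ⟨e x, hmaps x⟩
      invFun x := ⟨e.symm x, hmaps' x⟩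
      left_inv x := Subtype.ext (e.symm_apply_apply x)
      right_inv x := Subtype.ext (e.apply_symm_apply x) }
  exact ⟨⟨d, (he.contMDiff.comp contMDiff_coe_sphere).codRestrict_sphere hmaps,
    (he'.contMDiff.comp contMDiff_coe_sphere).codRestrict_sphere hmaps'⟩, fun x => rfl⟩

end SphereDiffeomorph

/-! ### Smooth normalization -/

section SmoothNormalize

variable {E : Type*} [NormedAddCommGroup E]

/-- A smooth positive function on an inner product space which agrees with the norm where
`1 / 2 ≤ ‖z‖ ^ 2`. -/
def smoothNorm (z : E) : ℝ := √(‖z‖ ^ 2 + (1 - Real.smoothTransition (2 * ‖z‖ ^ 2)))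

theorem smoothNorm_radicand_pos (z : E) :
    0 < ‖z‖ ^ 2 + (1 - Real.smoothTransition (2 * ‖z‖ ^ 2)) := by
  have hle := Real.smoothTransition.le_one (2 * ‖z‖ ^ 2)
  rcases (sq_nonneg ‖z‖).eq_or_lt with h | h
  · simp [← h]
  · linarith

theorem smoothNorm_pos (z : E) : 0 < smoothNorm z :=
  Real.sqrt_pos.2 (smoothNorm_radicand_pos z)

theorem smoothNorm_eq_norm {z : E} (hz : 1 / 2 ≤ ‖z‖ ^ 2) : smoothNorm z = ‖z‖ := by
  rw [smoothNorm, Real.smoothTransition.one_of_one_le (by linarith), sub_self, add_zero,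
    Real.sqrt_sq (norm_nonneg z)]

variable [InnerProductSpace ℝ E]

theorem contDiff_smoothNorm : ContDiff ℝ ∞ (smoothNorm : E → ℝ) := by
  have hsq : ContDiff ℝ ∞ fun z : E => ‖z‖ ^ 2 := contDiff_norm_sq ℝ
  exact (hsq.add (contDiff_const.sub
    (Real.smoothTransition.contDiff.comp (contDiff_const.mul hsq)))).sqrt
      fun z => (smoothNorm_radicand_pos z).ne'

/-- Radial projection to the unit sphere, modified near the origin so as to be smooth everywhere. -/
def smoothNormalize (z : E) : E := (smoothNorm z)⁻¹ • z

theorem contDiff_smoothNormalize : ContDiff ℝ ∞ (smoothNormalize : E → E) :=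
  (contDiff_smoothNorm.inv fun z => (smoothNorm_pos z).ne').smul contDiff_id

theorem smoothNorm_smul_smoothNormalize (z : E) : smoothNorm z • smoothNormalize z = z :=
  smul_inv_smul₀ (smoothNorm_pos z).ne' z

theorem norm_smoothNormalize {z : E} (hz : 1 / 2 ≤ ‖z‖ ^ 2) : ‖smoothNormalize z‖ = 1 := by
  have hpos := smoothNorm_pos z
  rw [smoothNormalize, norm_smul, norm_inv, Real.norm_of_nonneg hpos.le, smoothNorm_eq_norm hz]
  rw [smoothNorm_eq_norm hz] at hpos
  exact inv_mul_cancel₀ hpos.ne'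

theorem smoothNormalize_of_norm_eq_one {z : E} (hz : ‖z‖ = 1) : smoothNormalize z = z := by
  rw [smoothNormalize, smoothNorm_eq_norm (by rw [hz]; norm_num), hz, inv_one, one_smul]

theorem exists_eq_smul_of_fderiv_smoothNormalize_eq_zero {z v : E}
    (hv : fderiv ℝ smoothNormalize z v = 0) :
    ∃ m : ℝ, v = m • smoothNormalize z := by
  have hderiv := (((contDiff_smoothNorm (E := E)).differentiable (by simp) z).hasFDerivAt.smul
    ((contDiff_smoothNormalize (E := E)).differentiable (by simp) z).hasFDerivAt)
  have hid := hderiv.congr_of_eventuallyEq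
    (Eventually.of_forall fun x => (smoothNorm_smul_smoothNormalize x).symm)
  refine ⟨fderiv ℝ smoothNorm z v, ?_⟩
  simpa [hv] using! DFunLike.congr_fun ((hasFDerivAt_id z).unique hid) v

end SmoothNormalize

/-! ### Ambient isotopies from small displacements -/

theorem fderiv_comp_prodMk_right {E F G : Type*} [NormedAddCommGroup E] [NormedSpace ℝ E]
    [NormedAddCommGroup F] [NormedSpace ℝ F] [NormedAddCommGroup G] [NormedSpace ℝ G]
    {f : E × F → G} (hf : Differentiable ℝ f) (x : E) (y : F) :
    fderiv ℝ (fun y => f (x, y)) y = (fderiv ℝ f (x, y)).comp (ContinuousLinearMap.inr ℝ E F) :=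
  ((hf (x, y)).hasFDerivAt.comp y (hasFDerivAt_prodMk_right x y)).fderiv

theorem continuous_fderiv_comp_prodMk_right {E F G : Type*} [NormedAddCommGroup E]
    [NormedSpace ℝ E] [NormedAddCommGroup F] [NormedSpace ℝ F] [NormedAddCommGroup G]
    [NormedSpace ℝ G] {f : E × F → G} (hf : ContDiff ℝ 1 f) :
    Continuous fun q : E × F => fderiv ℝ (fun y => f (q.1, y)) q.2 := by
  simp only [fderiv_comp_prodMk_right (hf.differentiable (by simp))]
  exact (hf.continuous_fderiv (by simp)).clm_comp continuous_const

theorem exists_shell_cutoff (E : Type*) [NormedAddCommGroup E] [NormedSpace ℝ E]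
    [FiniteDimensional ℝ E] :
    ∃ χ : E → ℝ, ContDiff ℝ ∞ χ ∧ (∀ x, ‖x‖ = 1 → χ x = 1) ∧ (∀ x, ‖x‖ ^ 2 ≤ 3 / 4 → χ x = 0) ∧
      ∀ x, 2 ≤ ‖x‖ → χ x = 0 := by
  have houter : IsClosed ({x : E | ‖x‖ ^ 2 ≤ 3 / 4} ∪ {x : E | 2 ≤ ‖x‖}) :=
    (isClosed_le (by fun_prop) continuous_const).union
      (isClosed_le continuous_const continuous_norm)
  have hdisj : Disjoint ({x : E | ‖x‖ ^ 2 ≤ 3 / 4} ∪ {x : E | 2 ≤ ‖x‖}) (sphere (0 : E) 1) := by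
    rw [Set.disjoint_right]
    intro x hx
    rw [mem_sphere_zero_iff_norm] at hx
    norm_num [hx]
  obtain ⟨χ, hzero, hone, -⟩ := exists_contMDiffMap_zero_one_of_isClosed (n := (⊤ : ℕ∞)) 𝓘(ℝ, E)
    houter isClosed_sphere hdisj
  exact ⟨χ, χ.contMDiff.contDiff, fun x hx => hone (mem_sphere_zero_iff_norm.2 hx),
    fun x hx => hzero (Or.inl hx), fun x hx => hzero (Or.inr hx)⟩

theorem eventually_norm_fderiv_sub_id_le {E : Type*} [NormedAddCommGroup E] [NormedSpace ℝ E]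
    [ProperSpace E] {Q : ℝ × E → E} (hQ : ContDiff ℝ 1 Q) {t₀ : ℝ}
    (h0 : ∀ x, Q (t₀, x) = x) {r : ℝ} (hsupp : ∀ t x, r ≤ ‖x‖ → Q (t, x) = x) {ε : ℝ}
    (hε : 0 < ε) :
    ∀ᶠ t in 𝓝 t₀, ∀ x, ‖fderiv ℝ (fun x => Q (t, x)) x - ContinuousLinearMap.id ℝ E‖ ≤ ε := by
  have hinside : ∀ᶠ t in 𝓝 t₀, ∀ x ∈ closedBall (0 : E) r,
      ‖fderiv ℝ (fun x => Q (t, x)) x - ContinuousLinearMap.id ℝ E‖ < ε := by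
    refine (isCompact_closedBall (0 : E) r).eventually_forall_of_forall_eventually
      (P := fun t x => ‖fderiv ℝ (fun x => Q (t, x)) x - ContinuousLinearMap.id ℝ E‖ < ε)
      fun x _ => ?_
    have hcont : Continuous fun q : ℝ × E =>
        ‖fderiv ℝ (fun x => Q (q.1, x)) q.2 - ContinuousLinearMap.id ℝ E‖ :=
      ((continuous_fderiv_comp_prodMk_right hQ).sub continuous_const).norm
    have hbase : ‖fderiv ℝ (fun x => Q (t₀, x)) x - ContinuousLinearMap.id ℝ E‖ < ε := by
      simpa only [h0, fderiv_fun_id, sub_self, norm_zero] using hε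
    exact (isOpen_lt hcont continuous_const).mem_nhds hbase
  filter_upwards [hinside] with t ht x
  rcases le_or_gt ‖x‖ r with hx | hx
  · exact (ht x (mem_closedBall_zero_iff.2 hx)).le
  · have hid : (fun x => Q (t, x)) =ᶠ[𝓝 x] fun x => x := by
      filter_upwards [continuous_norm.continuousAt.eventually (lt_mem_nhds hx)] with z hz
      exact hsupp t z hz.le
    rw [hid.fderiv_eq, fderiv_fun_id, sub_self, norm_zero]
    exact hε.le

section NormPreserving

variable {E : Type*} [NormedAddCommGroup E] [InnerProductSpace ℝ E] [FiniteDimensional ℝ E]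

theorem exists_norm_preserving_family {v : ℝ × E → E} (hv : ContDiff ℝ ∞ v) {t₀ : ℝ}
    (h0 : ∀ x, v (t₀, x) = 0) :
    ∃ Q : ℝ × E → E, ContDiff ℝ ∞ Q ∧ (∀ x, Q (t₀, x) = x) ∧
      (∀ t x, ‖x‖ = 1 → Q (t, x) = smoothNormalize (x + v (t, x))) ∧
      ∀ᶠ t in 𝓝 t₀, (∀ x, ‖Q (t, x)‖ = ‖x‖) ∧
        ∀ x, ‖fderiv ℝ (fun x => Q (t, x)) x - ContinuousLinearMap.id ℝ E‖ ≤ 1 / 2 := by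
  obtain ⟨χ, hχ, hone, hinner, houter⟩ := exists_shell_cutoff E
  let D : ℝ × E → E := fun q => q.2 + χ q.2 • v q
  have hD : ContDiff ℝ ∞ D := contDiff_snd.add ((hχ.comp contDiff_snd).smul hv)
  let Q : ℝ × E → E := fun q => smoothNorm q.2 • smoothNormalize (D q)
  have hQ : ContDiff ℝ ∞ Q :=
    (contDiff_smoothNorm.comp contDiff_snd).smul (contDiff_smoothNormalize.comp hD)
  have hQid : ∀ t x, D (t, x) = x → Q (t, x) = x := fun t x hx => by
    simp only [Q, hx, smoothNorm_smul_smoothNormalize]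
  have hQsupp : ∀ t x, χ x = 0 → Q (t, x) = x := fun t x hx =>
    hQid t x (by simp only [D, hx, zero_smul, add_zero])
  have hD0 : ∀ x, D (t₀, x) = x := fun x => by simp only [D, h0, smul_zero, add_zero]
  have hlarge : ∀ᶠ t in 𝓝 t₀, ∀ x ∈ closedBall (0 : E) 2 ∩ {x | 3 / 4 ≤ ‖x‖ ^ 2},
      1 / 2 < ‖D (t, x)‖ ^ 2 := by
    refine ((isCompact_closedBall (0 : E) 2).inter_right (isClosed_le continuous_const
      (by fun_prop))).eventually_forall_of_forall_eventually
      (P := fun t x => 1 / 2 < ‖D (t, x)‖ ^ 2) fun x hx => ?_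
    refine (isOpen_lt continuous_const (hD.continuous.norm.pow 2)).mem_nhds ?_
    change 1 / 2 < ‖D (t₀, x)‖ ^ 2
    rw [hD0]
    exact lt_of_lt_of_le (by norm_num) hx.2
  refine ⟨Q, hQ, fun x => hQid t₀ x (hD0 x), fun t x hx => ?_, ?_⟩
  · simp only [Q, D, hone x hx, one_smul, smoothNorm_eq_norm (z := x) (by norm_num [hx]), hx]
  filter_upwards [hlarge, eventually_norm_fderiv_sub_id_le (hQ.of_le (by simp))
    (fun x => hQid t₀ x (hD0 x)) (fun t x hx => hQsupp t x (houter x hx)) one_half_pos]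
    with t ht hclose
  refine ⟨fun x => ?_, hclose⟩
  by_cases hx : ‖x‖ ^ 2 ≤ 3 / 4 ∨ 2 ≤ ‖x‖
  · rw [hQsupp t x (hx.elim (hinner x) (houter x))]
  · push Not at hx
    have hDx := ht x ⟨mem_closedBall_zero_iff.2 hx.2.le, hx.1.le⟩
    simp only [Q]
    rw [norm_smul, norm_smoothNormalize hDx.le, mul_one, Real.norm_of_nonneg (smoothNorm_pos x).le,
      smoothNorm_eq_norm (by linarith)]

end NormPreserving

theorem contMDiff_restrict_unitInterval_prod_S3 {Q : ℝ × E4 → E4} (hQ : ContDiff ℝ ∞ Q)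
    (hmem : ∀ p : Icc (0 : ℝ) 1 × S3, Q (p.1, p.2) ∈ sphere (0 : E4) 1) :
    ContMDiff ((𝓡∂ 1).prod (𝓡 3)) (𝓡 3) ∞
      fun p : Icc (0 : ℝ) 1 × S3 => (⟨Q (p.1, p.2), hmem p⟩ : S3) := by
  have hfst : ContMDiff ((𝓡∂ 1).prod (𝓡 3)) 𝓘(ℝ, ℝ) ∞
      fun p : Icc (0 : ℝ) 1 × S3 => (p.1 : ℝ) := contMDiff_subtypeVal_Icc.comp contMDiff_fst
  have hsnd : ContMDiff ((𝓡∂ 1).prod (𝓡 3)) 𝓘(ℝ, E4) ∞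
      fun p : Icc (0 : ℝ) 1 × S3 => (p.2 : E4) := contMDiff_coe_sphere.comp contMDiff_snd
  exact (hQ.contMDiff.comp (hfst.prodMk_space hsnd)).codRestrict_sphere hmem

theorem eventually_exists_ambientIsotopy {v : ℝ × E4 → E4} (hv : ContDiff ℝ ∞ v) {t₀ : ℝ}
    (h0 : ∀ x, v (t₀, x) = 0) :
    ∀ᶠ t in 𝓝 t₀, ∃ h : AmbientIsotopy, ∀ x : S3,
      (h.toFun 1 x : E4) = smoothNormalize ((x : E4) + v (t, x)) := by
  obtain ⟨Q, hQ, hbase, hsphere, hev⟩ := exists_norm_preserving_family hv h0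
  obtain ⟨δ, hδ, hball⟩ := Metric.eventually_nhds_iff_ball.1 hev
  refine Metric.eventually_nhds_iff_ball.2 ⟨δ, hδ, fun t ht => ?_⟩
  have hpath : ∀ l : Icc (0 : ℝ) 1, t₀ + l * (t - t₀) ∈ ball t₀ δ := fun l =>
    (convex_ball t₀ δ).add_smul_sub_mem (mem_ball_self hδ) ht l.2
  have hmem : ∀ p : Icc (0 : ℝ) 1 × S3, Q (t₀ + p.1 * (t - t₀), p.2) ∈ sphere (0 : E4) 1 :=
    fun p => by rw [mem_sphere_zero_iff_norm, (hball _ (hpath p.1)).1, norm_eq_of_mem_sphere]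
  have hpull : ContDiff ℝ ∞ fun q : ℝ × E4 => Q (t₀ + q.1 * (t - t₀), q.2) :=
    hQ.comp (by fun_prop)
  refine ⟨⟨fun l x => ⟨_, hmem (l, x)⟩, contMDiff_restrict_unitInterval_prod_S3 hpull hmem,
    fun x => Subtype.ext ?_, fun l => ?_⟩, fun x => ?_⟩
  · simp only [Icc.coe_zero, zero_mul, add_zero, hbase]
  · obtain ⟨hnorm, hclose⟩ := hball _ (hpath l)
    have hslice : ContDiff ℝ ∞ fun x => Q (t₀ + l * (t - t₀), x) := hQ.comp (by fun_prop)
    obtain ⟨e, he, he'⟩ := exists_homeomorph_of_norm_fderiv_sub_id_le (c := 1 / 2) (by simp) hslice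
      (by norm_num [← NNReal.coe_lt_coe]) hclose
    obtain ⟨d, hd⟩ := exists_sphere_diffeomorph_of_norm_map (n := 3) e (he ▸ hslice) he'
      (by simpa only [he] using hnorm)
    exact ⟨d, fun x => Subtype.ext (by rw [hd, he])⟩
  · simp only [Icc.coe_one, one_mul, add_sub_cancel]
    exact hsphere t x (norm_eq_of_mem_sphere x)

/-! ### Local left inverses of immersions -/

theorem exists_eventually_leftInverse_of_hasFDerivAt_equiv {V W : Type*} [NormedAddCommGroup V]
    [NormedSpace ℝ V] [CompleteSpace V] [NormedAddCommGroup W] [NormedSpace ℝ W] {f : V → W}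
    {n : WithTop ℕ∞} (hn : n ≠ 0) (hf : ContDiff ℝ n f) {p : V} {e : V ≃L[ℝ] W}
    (he : HasFDerivAt f (e : V →L[ℝ] W) p) :
    ∃ g : W → V, (∀ᶠ w in 𝓝 (f p), ContDiffAt ℝ n g w) ∧ ∀ᶠ q in 𝓝 p, g (f q) = q := by
  have hfp : ContDiffAt ℝ n f p := hf.contDiffAt
  let φ := hfp.toOpenPartialHomeomorph f he hn
  have hsource : p ∈ φ.source := hfp.mem_toOpenPartialHomeomorph_source he hn
  have htarget : f p ∈ φ.target := hfp.image_mem_toOpenPartialHomeomorph_target he hn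
  have hinvertible : ∀ᶠ q in 𝓝 p, fderiv ℝ f q ∈ range ((↑) : (V ≃L[ℝ] W) → V →L[ℝ] W) := by
    refine (hf.continuous_fderiv hn).continuousAt.eventually ?_
    rw [he.fderiv]
    exact ContinuousLinearEquiv.nhds e
  have hsymm : Tendsto φ.symm (𝓝 (f p)) (𝓝 p) := by
    simpa only [ContinuousAt, show φ.symm (f p) = p from φ.left_inv hsource]
      using φ.symm.continuousAt htarget
  refine ⟨φ.symm, ?_, φ.eventually_left_inverse hsource⟩
  filter_upwards [hsymm.eventually hinvertible, φ.open_target.mem_nhds htarget]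
    with w ⟨A, hA⟩ hw
  exact φ.contDiffAt_symm hw (hA ▸ (hf.differentiable hn _).hasFDerivAt) hf.contDiffAt

theorem exists_eventually_leftInverse_of_injective_fderiv {V W : Type*} [NormedAddCommGroup V]
    [NormedSpace ℝ V] [FiniteDimensional ℝ V] [NormedAddCommGroup W] [NormedSpace ℝ W]
    [FiniteDimensional ℝ W] {f : V → W} {n : WithTop ℕ∞} (hn : n ≠ 0) (hf : ContDiff ℝ n f) {p : V}
    (hp : Injective (fderiv ℝ f p)) :
    ∃ g : W → V, (∀ᶠ w in 𝓝 (f p), ContDiffAt ℝ n g w) ∧ ∀ᶠ q in 𝓝 p, g (f q) = q := by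
  have : CompleteSpace V := FiniteDimensional.complete ℝ V
  obtain ⟨L₀, hL₀⟩ := (fderiv ℝ f p : V →ₗ[ℝ] W).exists_leftInverse_of_injective
    (LinearMap.ker_eq_bot.2 hp)
  let L : W →L[ℝ] V := LinearMap.toContinuousLinearMap L₀
  have hcomp : L.comp (fderiv ℝ f p) = (ContinuousLinearEquiv.refl ℝ V : V →L[ℝ] V) := by
    ext v
    exact LinearMap.congr_fun hL₀ v
  have hderiv := L.hasFDerivAt.comp p (hf.differentiable hn p).hasFDerivAt
  rw [hcomp] at hderiv
  obtain ⟨g, hg, hleft⟩ :=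
    exists_eventually_leftInverse_of_hasFDerivAt_equiv hn (L.contDiff.comp hf) hderiv
  refine ⟨g ∘ L, ?_, hleft⟩
  filter_upwards [L.continuous.continuousAt.eventually hg] with w hw
  exact hw.comp w L.contDiff.contDiffAt

/-! ### Embeddings of quotients by a group of periods -/

section IsCompactMod

variable {V : Type*} [NormedAddCommGroup V] {Λ : AddSubgroup V} {A : Set V}

/-- `A` is covered by the `Λ`-translates of a compact subset of `A`. -/
def IsCompactMod (Λ : AddSubgroup V) (A : Set V) : Prop :=
  ∃ K ⊆ A, IsCompact K ∧ ∀ p ∈ A, ∃ γ ∈ Λ, p + γ ∈ K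

theorem IsCompactMod.prod {U : Type*} [NormedAddCommGroup U] {M : AddSubgroup U} {B : Set U}
    (hA : IsCompactMod Λ A) (hB : IsCompactMod M B) : IsCompactMod (Λ.prod M) (A ×ˢ B) := by
  obtain ⟨K, hKA, hK, hcover⟩ := hA
  obtain ⟨L, hLB, hL, hcover'⟩ := hB
  refine ⟨K ×ˢ L, prod_mono hKA hLB, hK.prod hL, fun p hp => ?_⟩
  obtain ⟨γ, hγ, hpγ⟩ := hcover p.1 hp.1
  obtain ⟨μ, hμ, hpμ⟩ := hcover' p.2 hp.2
  exact ⟨(γ, μ), ⟨hγ, hμ⟩, hpγ, hpμ⟩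

theorem IsCompactMod.exists_forall_thickening {T : Type*} [PseudoMetricSpace T] {S : Set T}
    (hS : IsCompact S) (hA : IsCompactMod Λ A) {P : T → V → Prop}
    (hP : ∀ t p, ∀ γ ∈ Λ, P t (p + γ) → P t p)
    (hloc : ∀ t ∈ S, ∀ p ∈ A, ∀ᶠ q : T × V in 𝓝 (t, p), P q.1 q.2) :
    ∃ ε > 0, ∀ t ∈ S, ∀ p ∈ thickening ε A, P t p := by
  obtain ⟨K, hKA, hK, hcover⟩ := hA
  have hsub : S ×ˢ K ⊆ interior {q : T × V | P q.1 q.2} := fun q hq =>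
    mem_interior_iff_mem_nhds.2 (hloc q.1 hq.1 q.2 (hKA hq.2))
  obtain ⟨ε, hε, hthick⟩ := (hS.prod hK).exists_thickening_subset_open isOpen_interior hsub
  refine ⟨ε, hε, fun t ht p hp => ?_⟩
  obtain ⟨a, ha, hpa⟩ := mem_thickening_iff.1 hp
  obtain ⟨γ, hγ, haγ⟩ := hcover a ha
  have hclose : (t, p + γ) ∈ thickening ε (S ×ˢ K) := by
    refine mem_thickening_iff.2 ⟨(t, a + γ), ⟨ht, haγ⟩, ?_⟩
    rw [Prod.dist_eq, dist_self, dist_add_right]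
    exact max_lt hε hpa
  have hmem : (t, p + γ) ∈ {q : T × V | P q.1 q.2} := interior_subset (hthick hclose)
  exact hP t p γ hγ hmem

end IsCompactMod

section EmbedsMod

variable {V W : Type*} [NormedAddCommGroup V] [NormedSpace ℝ V] [NormedAddCommGroup W]
  [NormedSpace ℝ W] {Λ : AddSubgroup V} {A : Set V} {f : V → W}

/-- `f` is an immersion along `A` and identifies two points of `A` only if they differ by an
element of `Λ`. For a `Λ`-periodic `f` this says that the image of `A` in `V ⧸ Λ` is embedded. -/
structure EmbedsMod (Λ : AddSubgroup V) (A : Set V) (f : V → W) : Prop where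
  injective_fderiv : ∀ p ∈ A, Injective (fderiv ℝ f p)
  sub_mem : ∀ p ∈ A, ∀ q ∈ A, f p = f q → q - p ∈ Λ

theorem EmbedsMod.mono {B : Set V} (hf : EmbedsMod Λ A f) (hBA : B ⊆ A) : EmbedsMod Λ B f :=
  ⟨fun p hp => hf.injective_fderiv p (hBA hp),
    fun p hp q hq => hf.sub_mem p (hBA hp) q (hBA hq)⟩

theorem EmbedsMod.comp {U : Type*} [NormedAddCommGroup U] [NormedSpace ℝ U] {M : AddSubgroup U}
    {B : Set U} {g : U → V} (hf : EmbedsMod Λ A f) (hfd : Differentiable ℝ f)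
    (hgd : Differentiable ℝ g) (hmaps : MapsTo g B A) (hg : ∀ p ∈ B, Injective (fderiv ℝ g p))
    (hΛ : ∀ p ∈ B, ∀ q ∈ B, g q - g p ∈ Λ → q - p ∈ M) : EmbedsMod M B (f ∘ g) where
  injective_fderiv p hp := by
    rw [fderiv_comp p (hfd (g p)) (hgd p)]
    exact (hf.injective_fderiv _ (hmaps hp)).comp (hg p hp)
  sub_mem p hp q hq h := hΛ p hp q hq (hf.sub_mem _ (hmaps hp) _ (hmaps hq) h)

theorem fderiv_periodic {γ : V} (hf : Periodic f γ) : Periodic (fderiv ℝ f) γ := fun p => by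
  conv_rhs => rw [← funext hf, fderiv_comp_add_right]

theorem EmbedsMod.exists_eventually_sub_mem (hper : ∀ γ ∈ Λ, Periodic f γ) (hf : ContDiff ℝ ∞ f)
    (h : EmbedsMod Λ A f) [FiniteDimensional ℝ V] [FiniteDimensional ℝ W] (x : W) :
    ∃ g : W → V, (∀ᶠ z in 𝓝 x, ContDiffAt ℝ ∞ g z) ∧
      ∀ p ∈ A, ∀ᶠ q : W × V in 𝓝 (x, p), f q.2 = q.1 → g q.1 - q.2 ∈ Λ := by
  have hne : ∀ g : W → V, ∀ p, f p ≠ x →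
      ∀ᶠ q : W × V in 𝓝 (x, p), f q.2 = q.1 → g q.1 - q.2 ∈ Λ := fun g p hp => by
    have hopen : IsOpen {q : W × V | f q.2 ≠ q.1} :=
      isOpen_ne_fun (hf.continuous.comp continuous_snd) continuous_fst
    filter_upwards [hopen.mem_nhds hp] with q hq heq using absurd heq hq
  by_cases hx : ∃ p₀ ∈ A, f p₀ = x
  · obtain ⟨p₀, hp₀, rfl⟩ := hx
    obtain ⟨g, hg, hleft⟩ :=
      exists_eventually_leftInverse_of_injective_fderiv (by simp) hf (h.injective_fderiv p₀ hp₀)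
    refine ⟨g, hg, fun p hp => ?_⟩
    by_cases hpe : f p = f p₀
    · have hγ : p₀ - p ∈ Λ := h.sub_mem p hp p₀ hp₀ hpe
      have htend : Tendsto (fun q : W × V => q.2 + (p₀ - p)) (𝓝 (f p₀, p)) (𝓝 p₀) :=
        (by fun_prop : Continuous fun q : W × V => q.2 + (p₀ - p)).tendsto' _ _
          (add_sub_cancel p p₀)
      filter_upwards [htend.eventually hleft] with q hq heq
      rw [hper _ hγ, heq] at hq
      rwa [hq, add_sub_cancel_left]
    · exact hne g p hpe
  · exact ⟨fun _ => 0, Eventually.of_forall fun _ => contDiffAt_const,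
      fun p hp => hne (fun _ => 0) p fun heq => hx ⟨p, hp, heq⟩⟩

theorem EmbedsMod.exists_local_retraction [FiniteDimensional ℝ V] [FiniteDimensional ℝ W]
    (hA : IsCompactMod Λ A) (hper : ∀ γ ∈ Λ, Periodic f γ) (hf : ContDiff ℝ ∞ f)
    (h : EmbedsMod Λ A f) (x : W) :
    ∃ U ∈ 𝓝 x, ∃ g : W → V, ContDiffOn ℝ ∞ g U ∧ ∀ p ∈ A, f p ∈ U → g (f p) - p ∈ Λ := by
  obtain ⟨K, hKA, hK, hcover⟩ := hA
  obtain ⟨g, hg, hgA⟩ := h.exists_eventually_sub_mem hper hf x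
  have hgK := hK.eventually_forall_of_forall_eventually
    (P := fun z p => f p = z → g z - p ∈ Λ) fun p hp => hgA p (hKA hp)
  refine ⟨_, inter_mem hgK hg, g, fun z hz => ContDiffAt.contDiffWithinAt (f := g) hz.2,
    fun p hp hpU => ?_⟩
  obtain ⟨γ, hγ, hpγ⟩ := hcover p hp
  have hmem : g (f p) - (p + γ) + γ ∈ Λ := Λ.add_mem (hpU.1 (p + γ) hpγ (hper γ hγ p)) hγ
  rwa [sub_add_eq_sub_sub, sub_add_cancel] at hmem

theorem EmbedsMod.exists_contDiff_extension [FiniteDimensional ℝ V] [FiniteDimensional ℝ W]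
    (hA : IsCompactMod Λ A) (hper : ∀ γ ∈ Λ, Periodic f γ) (hf : ContDiff ℝ ∞ f)
    (h : EmbedsMod Λ A f) {T X : Type*} [NormedAddCommGroup T] [NormedSpace ℝ T]
    [FiniteDimensional ℝ T] [NormedAddCommGroup X] [NormedSpace ℝ X] {φ : T × V → X}
    (hφ : ContDiff ℝ ∞ φ) (hφper : ∀ t, ∀ γ ∈ Λ, Periodic (fun p => φ (t, p)) γ) :
    ∃ Φ : T × W → X, ContDiff ℝ ∞ Φ ∧ ∀ t, ∀ p ∈ A, Φ (t, f p) = φ (t, p) := by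
  let S : T × W → Set X := fun q => {v | ∀ p ∈ A, f p = q.2 → v = φ (q.1, p)}
  have hconvex : ∀ q, Convex ℝ (S q) := fun q v hv w hw a b _ _ hab p hp hpq => by
    rw [hv p hp hpq, hw p hp hpq, ← add_smul, hab, one_smul]
  obtain ⟨Φ, hΦ⟩ := exists_contMDiffMap_forall_mem_convex_of_local (n := ⊤) 𝓘(ℝ, T × W) hconvex
    fun ⟨t, x⟩ => by
      obtain ⟨U, hU, g, hg, hgA⟩ := h.exists_local_retraction hA hper hf x
      refine ⟨univ ×ˢ U, prod_mem_nhds univ_mem hU, fun q => φ (q.1, g q.2), ?_, ?_⟩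
      · exact (hφ.comp_contDiffOn (contDiff_fst.contDiffOn.prodMk
          (hg.comp contDiff_snd.contDiffOn fun q hq => hq.2))).contMDiffOn
      · rintro ⟨s, _⟩ ⟨-, hpU⟩ p hp rfl
        simpa only [add_sub_cancel] using hφper s _ (hgA p hp hpU) p
  exact ⟨Φ, Φ.contMDiff.contDiff, fun t p hp => hΦ (t, f p) p hp rfl⟩

theorem injective_fderiv_prodMk_fst {T : Type*} [NormedAddCommGroup T] [NormedSpace ℝ T]
    {J : T × V → W} (hJ : Differentiable ℝ J) {t : T} {p : V}
    (h : Injective (fderiv ℝ (fun p => J (t, p)) p)) :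
    Injective (fderiv ℝ (fun q : T × V => (q.1, J q)) (t, p)) := by
  have hderiv : fderiv ℝ (fun q : T × V => (q.1, J q)) (t, p) =
      (ContinuousLinearMap.fst ℝ T V).prod (fderiv ℝ J (t, p)) :=
    (hasFDerivAt_fst.prodMk (hJ _).hasFDerivAt).fderiv
  rw [fderiv_comp_prodMk_right hJ, injective_iff_map_eq_zero] at h
  rw [hderiv, injective_iff_map_eq_zero]
  rintro ⟨a, b⟩ hab
  obtain ⟨rfl, hb⟩ := Prod.mk.inj hab
  exact Prod.ext rfl (h b hb)

section Openness

variable [FiniteDimensional ℝ V] [FiniteDimensional ℝ W] {T : Type*} [NormedAddCommGroup T]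
  [NormedSpace ℝ T] [FiniteDimensional ℝ T] {J : T × V → W}

theorem eventually_sub_mem_of_injective_fderiv (hJ : ContDiff ℝ ∞ J)
    (hper : ∀ t, ∀ γ ∈ Λ, Periodic (fun p => J (t, p)) γ) {t : T} {p p' : V}
    (himm : Injective (fderiv ℝ (fun p => J (t, p)) p)) (hsub : J (t, p) = J (t, p') → p' - p ∈ Λ) :
    ∀ᶠ q : T × V × V in 𝓝 (t, p, p'), J (q.1, q.2.1) = J (q.1, q.2.2) → q.2.2 - q.2.1 ∈ Λ := by
  by_cases heq : J (t, p) = J (t, p')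
  · have hγ := hsub heq
    set γ := p' - p with hγdef
    obtain ⟨g, -, hg⟩ := exists_eventually_leftInverse_of_injective_fderiv (by simp)
      (contDiff_fst.prodMk hJ) (injective_fderiv_prodMk_fst (hJ.differentiable (by simp)) himm)
    have htend : Tendsto (fun q : T × V × V => (q.1, q.2.1)) (𝓝 (t, p, p')) (𝓝 (t, p)) :=
      (by fun_prop : Continuous fun q : T × V × V => (q.1, q.2.1)).tendsto _
    have htend' : Tendsto (fun q : T × V × V => (q.1, q.2.2 - γ)) (𝓝 (t, p, p')) (𝓝 (t, p)) :=
      (by fun_prop : Continuous fun q : T × V × V => (q.1, q.2.2 - γ)).tendsto' _ _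
        (by simp [hγdef])
    filter_upwards [htend.eventually hg, htend'.eventually hg] with q hq hq' hJq
    have hshift : J (q.1, q.2.2 - γ) = J (q.1, q.2.2) := (hper q.1 γ hγ).sub_eq _
    have hfst : q.2.1 = q.2.2 - γ := by
      have h := hq.symm.trans ((congrArg g (by rw [hshift, hJq])).trans hq')
      exact (Prod.mk.inj h).2
    rwa [hfst, sub_sub_cancel]
  · have hopen : IsOpen {q : T × V × V | J (q.1, q.2.1) ≠ J (q.1, q.2.2)} :=
      isOpen_ne_fun (hJ.continuous.comp (by fun_prop)) (hJ.continuous.comp (by fun_prop))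
    filter_upwards [hopen.mem_nhds heq] with q hq hq' using absurd hq' hq

theorem EmbedsMod.exists_thickening (hJ : ContDiff ℝ ∞ J)
    (hper : ∀ t, ∀ γ ∈ Λ, Periodic (fun p => J (t, p)) γ) {S : Set T} (hS : IsCompact S)
    (hA : IsCompactMod Λ A) (h : ∀ t ∈ S, EmbedsMod Λ A fun p => J (t, p)) :
    ∃ ε > 0, ∀ t ∈ S, EmbedsMod Λ (thickening ε A) fun p => J (t, p) := by
  obtain ⟨ε₁, hε₁, himm⟩ := hA.exists_forall_thickening hS
    (P := fun t p => Injective (fderiv ℝ (fun p => J (t, p)) p))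
    (fun t p γ hγ => by rw [fderiv_periodic (hper t γ hγ)]; exact id)
    (fun t ht p hp => (continuous_fderiv_comp_prodMk_right (hJ.of_le (by simp))).tendsto (t, p)
      |>.eventually
        (ContinuousLinearMap.isOpen_injective.mem_nhds ((h t ht).injective_fderiv p hp)))
  obtain ⟨ε₂, hε₂, hinj⟩ := (hA.prod hA).exists_forall_thickening hS
    (P := fun t q => J (t, q.1) = J (t, q.2) → q.2 - q.1 ∈ Λ)
    (fun t q γ hγ hq heq => by
      have hmem := hq ((hper t _ hγ.1 q.1).trans (heq.trans (hper t _ hγ.2 q.2).symm))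
      convert Λ.add_mem (Λ.sub_mem hmem hγ.2) hγ.1 using 1
      simp only [Prod.fst_add, Prod.snd_add]
      abel)
    (fun t ht q hq => eventually_sub_mem_of_injective_fderiv hJ hper
      ((h t ht).injective_fderiv _ hq.1) ((h t ht).sub_mem _ hq.1 _ hq.2))
  refine ⟨min ε₁ ε₂, lt_min hε₁ hε₂, fun t ht => ⟨fun p hp => ?_, fun p hp q hq => ?_⟩⟩
  · exact himm t ht p (thickening_mono (min_le_left _ _) A hp)
  · refine hinj t ht (p, q) ?_
    obtain ⟨a, ha, hpa⟩ := mem_thickening_iff.1 (thickening_mono (min_le_right _ _) A hp)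
    obtain ⟨b, hb, hqb⟩ := mem_thickening_iff.1 (thickening_mono (min_le_right _ _) A hq)
    exact mem_thickening_iff.2 ⟨(a, b), ⟨ha, hb⟩, max_lt hpa hqb⟩

end Openness

end EmbedsMod

/-! ### Isotopy extension -/

/-- The image `f '' A` as a subset of `S³`. -/
def trace {V : Type*} (f : V → E4) (A : Set V) : Set S3 :=
  {x | (x : E4) ∈ f '' A}

theorem ambientIsotopic_trace_of_embedsMod {V : Type*} [NormedAddCommGroup V] [NormedSpace ℝ V]
    [FiniteDimensional ℝ V] {Λ : AddSubgroup V} {A : Set V} {J : ℝ × V → E4}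
    (hJ : ContDiff ℝ ∞ J) (hper : ∀ t, ∀ γ ∈ Λ, Periodic (fun p => J (t, p)) γ)
    (hA : IsCompactMod Λ A) (hnorm : ∀ t ∈ Icc (0 : ℝ) 1, ∀ p ∈ A, ‖J (t, p)‖ = 1)
    (hembeds : ∀ t ∈ Icc (0 : ℝ) 1, EmbedsMod Λ A fun p => J (t, p)) :
    AmbientIsotopic (trace (fun p => J (0, p)) A) (trace (fun p => J (1, p)) A) := by
  refine isPreconnected_Icc.induction₂
    (fun a b => AmbientIsotopic (trace (fun p => J (a, p)) A) (trace (fun p => J (b, p)) A))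
    (fun t₀ ht₀ => ?_) (fun _ _ _ _ _ _ hab hbc => hab.trans hbc) (fun _ _ _ _ hab => hab.symm)
    (left_mem_Icc.2 zero_le_one) (right_mem_Icc.2 zero_le_one)
  obtain ⟨Φ, hΦ, hΦJ⟩ := (hembeds t₀ ht₀).exists_contDiff_extension hA (hper t₀)
    (hJ.comp (contDiff_const.prodMk contDiff_id)) hJ hper
  have hmove := eventually_exists_ambientIsotopy
    (v := fun q => Φ q - Φ (t₀, q.2)) (t₀ := t₀) (hΦ.sub (hΦ.comp (by fun_prop))) (by simp)
  filter_upwards [nhdsWithin_le_nhds hmove, self_mem_nhdsWithin] with t ⟨h, hh⟩ ht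
  have hcarry : ∀ (x : S3), ∀ p ∈ A, J (t₀, p) = x → (h.toFun 1 x : E4) = J (t, p) :=
    fun x p hp hx => by
      rw [hh, ← hx, hΦJ t p hp, hΦJ t₀ p hp, add_sub_cancel,
        smoothNormalize_of_norm_eq_one (hnorm t ht p hp)]
  refine ⟨h, Subset.antisymm ?_ ?_⟩
  · rintro _ ⟨x, ⟨p, hp, hx⟩, rfl⟩
    exact ⟨p, hp, (hcarry x p hp hx).symm⟩
  · rintro z ⟨p, hp, hz⟩
    let x : S3 := ⟨J (t₀, p), mem_sphere_zero_iff_norm.2 (hnorm t₀ ht₀ p hp)⟩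
    exact ⟨x, ⟨p, hp, rfl⟩, Subtype.ext ((hcarry x p hp rfl).trans hz)⟩

/-! ### Smoothness of difference quotients -/

section DifferenceQuotient

universe u

variable {E F : Type u} [NormedAddCommGroup E] [NormedSpace ℝ E] [ProperSpace E]
  [NormedAddCommGroup F] [NormedSpace ℝ F]

theorem hasFDerivAt_parametric_intervalIntegral {g : E × ℝ → F} (hg : ContDiff ℝ 1 g)
    (a b : ℝ) (x : E) :
    HasFDerivAt (fun p => ∫ τ in a..b, g (p, τ))
      (∫ τ in a..b, (fderiv ℝ g (x, τ)).comp (ContinuousLinearMap.inl ℝ E ℝ)) x := by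
  set G : E × ℝ → E →L[ℝ] F := fun q => (fderiv ℝ g q).comp (ContinuousLinearMap.inl ℝ E ℝ)
  have hG : Continuous G := (hg.continuous_fderiv one_ne_zero).clm_comp continuous_const
  have hgx : ∀ p, Continuous fun τ => g (p, τ) := fun p => hg.continuous.comp (by fun_prop)
  obtain ⟨C, hC⟩ := ((isCompact_closedBall x 1).prod isCompact_uIcc).exists_bound_of_continuousOn
    (f := G) (s := closedBall x 1 ×ˢ uIcc a b) hG.continuousOn
  refine intervalIntegral.hasFDerivAt_integral_of_dominated_of_fderiv_le
    (F' := fun p τ => G (p, τ)) (bound := fun _ => C) (closedBall_mem_nhds x one_pos)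
    (Eventually.of_forall fun p => (hgx p).aestronglyMeasurable)
    ((hgx x).intervalIntegrable _ _)
    (hG.comp (by fun_prop : Continuous fun τ => (x, τ))).aestronglyMeasurable
    (Eventually.of_forall fun τ hτ p hp => hC (p, τ) ⟨hp, uIoc_subset_uIcc hτ⟩)
    intervalIntegrable_const (Eventually.of_forall fun τ _ p _ => ?_)
  exact (hg.differentiable one_ne_zero (p, τ)).hasFDerivAt.comp p (hasFDerivAt_prodMk_left p τ)

theorem contDiff_nat_parametric_intervalIntegral (a b : ℝ) (n : ℕ) {g : E × ℝ → F}
    (hg : ContDiff ℝ n g) : ContDiff ℝ n fun p => ∫ τ in a..b, g (p, τ) := by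
  induction n generalizing F with
  | zero =>
    rw [Nat.cast_zero, contDiff_zero] at hg ⊢
    exact intervalIntegral.continuous_parametric_intervalIntegral_of_continuous'
      (f := fun p τ => g (p, τ)) hg a b
  | succ n ih =>
    rw [Nat.cast_succ] at hg ⊢
    have hG : ContDiff ℝ n fun q => (fderiv ℝ g q).comp (ContinuousLinearMap.inl ℝ E ℝ) :=
      (hg.fderiv_right le_rfl).clm_comp contDiff_const
    exact contDiff_succ_iff_hasFDerivAt.2 ⟨_, ih hG, fun x =>
      hasFDerivAt_parametric_intervalIntegral (hg.of_le (by simp)) a b x⟩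

theorem contDiff_parametric_intervalIntegral (a b : ℝ) {g : E × ℝ → F} (hg : ContDiff ℝ ∞ g) :
    ContDiff ℝ ∞ fun p => ∫ τ in a..b, g (p, τ) :=
  contDiff_infty.2 fun n =>
    contDiff_nat_parametric_intervalIntegral a b n (hg.of_le (by exact_mod_cast le_top))

theorem dslope_zero_eq_intervalIntegral_deriv {F : Type*} [NormedAddCommGroup F]
    [NormedSpace ℝ F] [CompleteSpace F] {f : ℝ → F} (hf : ContDiff ℝ 1 f) (y : ℝ) :
    dslope f 0 y = ∫ τ in (0 : ℝ)..1, deriv f (τ * y) := by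
  rcases eq_or_ne y 0 with rfl | hy
  · simp
  · have hderiv : ∀ x ∈ uIcc (0 : ℝ) y, HasDerivAt f (deriv f x) x := fun x _ =>
      (hf.differentiable one_ne_zero x).hasDerivAt
    rw [dslope_of_ne _ hy, slope_def_module, intervalIntegral.integral_comp_mul_right _ hy,
      zero_mul, one_mul, intervalIntegral.integral_eq_sub_of_hasDerivAt hderiv
      ((hf.continuous_deriv le_rfl).intervalIntegrable _ _), sub_zero]

theorem contDiff_dslope_zero [CompleteSpace F] {f : E × ℝ → F} (hf : ContDiff ℝ ∞ f) :
    ContDiff ℝ ∞ fun q : E × ℝ => dslope (fun y => f (q.1, y)) 0 q.2 := by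
  have hderiv : ∀ x y, deriv (fun y => f (x, y)) y = fderiv ℝ f (x, y) (0, 1) := fun x y => by
    rw [← fderiv_apply_one_eq_deriv, fderiv_comp_prodMk_right (hf.differentiable (by simp))]
    rfl
  have hslice : ∀ x, ContDiff ℝ 1 fun y => f (x, y) := fun x =>
    (hf.of_le (by simp)).comp (by fun_prop)
  have hsmooth : ContDiff ℝ ∞ fun q : (E × ℝ) × ℝ => fderiv ℝ f (q.1.1, q.2 * q.1.2) (0, 1) :=
    ((hf.fderiv_right (by simp)).comp (by fun_prop)).clm_apply contDiff_const
  simpa only [dslope_zero_eq_intervalIntegral_deriv (hslice _), hderiv]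
    using contDiff_parametric_intervalIntegral 0 1 hsmooth

end DifferenceQuotient

/-! ### Annuli from one latitude circle to the other -/

/-- The deck transformations of the universal cover `ℝ × ℝ` of the cylinder. -/
def cylinderPeriods : AddSubgroup (ℝ × ℝ) :=
  AddSubgroup.zmultiples (2 * Real.pi, 0)

theorem mem_cylinderPeriods {p : ℝ × ℝ} :
    p ∈ cylinderPeriods ↔ (∃ k : ℤ, p.1 = k * (2 * Real.pi)) ∧ p.2 = 0 := by
  simp only [cylinderPeriods, AddSubgroup.mem_zmultiples_iff, Prod.ext_iff, Prod.smul_mk,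
    smul_zero, zsmul_eq_mul, exists_and_right, eq_comm]

theorem periodic_of_mem_cylinderPeriods {X : Type*} {f : ℝ × ℝ → X}
    (hf : ∀ s y, f (s + 2 * Real.pi, y) = f (s, y)) {γ : ℝ × ℝ} (hγ : γ ∈ cylinderPeriods) :
    Periodic f γ := by
  obtain ⟨k, rfl⟩ := AddSubgroup.mem_zmultiples_iff.1 hγ
  refine Periodic.zsmul (fun ⟨s, y⟩ => ?_) k
  rw [Prod.mk_add_mk, add_zero, hf]

theorem isCompactMod_univ_prod {B : Set ℝ} (hB : IsCompact B) :
    IsCompactMod cylinderPeriods (univ ×ˢ B) := by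
  refine ⟨Icc 0 (2 * Real.pi) ×ˢ B, prod_mono (subset_univ _) subset_rfl, isCompact_Icc.prod hB,
    fun p hp => ?_⟩
  obtain ⟨k, hk, -⟩ := existsUnique_add_zsmul_mem_Ico Real.two_pi_pos p.1 0
  rw [zero_add] at hk
  exact ⟨k • (2 * Real.pi, 0), AddSubgroup.zsmul_mem_zmultiples _ k, Ico_subset_Icc_self hk,
    by simpa using hp.2⟩

/-- The round circle of `S³` at height `x₃ = h` in the equatorial sphere `x₄ = 0`. -/
def latitudeCircle (h : ℝ) : Set E4 :=
  {x | ‖x‖ = 1 ∧ x 2 = h ∧ x 3 = 0}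

/-- `f` parametrizes an embedded annulus in `S³` running from the latitude circle at height `1/2`
(at `y = 0`) to the one at height `-1/2` (at `y = 1`). -/
structure IsSpanningAnnulus (f : ℝ × ℝ → E4) : Prop where
  contDiff : ContDiff ℝ ∞ f
  norm_eq_one : ∀ p, ‖f p‖ = 1
  periodic : ∀ s y, f (s + 2 * Real.pi, y) = f (s, y)
  embedsMod : EmbedsMod cylinderPeriods (univ ×ˢ Icc 0 1) f
  range_zero : range (fun s => f (s, 0)) = latitudeCircle (1 / 2)
  mem_one : ∀ s, f (s, 1) ∈ latitudeCircle (-(1 / 2))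

theorem injective_fderiv_vertical_affine {α β : ℝ} (hβ : β ≠ 0) (p : ℝ × ℝ) :
    Injective (fderiv ℝ (fun p : ℝ × ℝ => (p.1, α + β * p.2)) p) := by
  have hderiv : HasFDerivAt (fun p : ℝ × ℝ => (p.1, α + β * p.2))
      ((ContinuousLinearMap.fst ℝ ℝ ℝ).prod (β • ContinuousLinearMap.snd ℝ ℝ ℝ)) p :=
    hasFDerivAt_fst.prodMk ((hasFDerivAt_snd.const_mul β).const_add α)
  rw [hderiv.fderiv, injective_iff_map_eq_zero]
  rintro ⟨a, b⟩ hab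
  obtain ⟨rfl, hb⟩ := Prod.mk.inj hab
  exact Prod.ext rfl ((mul_eq_zero.1 hb).resolve_left hβ)

theorem EmbedsMod.comp_vertical_affine {W : Type*} [NormedAddCommGroup W] [NormedSpace ℝ W]
    {f : ℝ × ℝ → W} {B B' : Set ℝ} (hf : EmbedsMod cylinderPeriods (univ ×ˢ B) f)
    (hfd : Differentiable ℝ f) {α β : ℝ} (hβ : β ≠ 0) (hmaps : MapsTo (fun y => α + β * y) B' B) :
    EmbedsMod cylinderPeriods (univ ×ˢ B') fun p => f (p.1, α + β * p.2) := by
  refine hf.comp hfd (g := fun p : ℝ × ℝ => (p.1, α + β * p.2)) (by fun_prop)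
    (fun p hp => ⟨mem_univ _, hmaps hp.2⟩) (fun p _ => injective_fderiv_vertical_affine hβ p)
    fun p _ q _ h => ?_
  obtain ⟨hk, h0⟩ := mem_cylinderPeriods.1 h
  refine mem_cylinderPeriods.2 ⟨hk, (mul_eq_zero.1 ?_).resolve_left hβ⟩
  simp only [Prod.snd_sub] at h0 ⊢
  linarith

theorem trace_comp_vertical_affine (f : ℝ × ℝ → E4) (α β : ℝ) (B : Set ℝ) :
    trace (fun p => f (p.1, α + β * p.2)) (univ ×ˢ B) =
      trace f (univ ×ˢ ((fun y => α + β * y) '' B)) := by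
  have himage := prodMap_image_prod (id : ℝ → ℝ) (fun y => α + β * y) univ B
  rw [image_id] at himage
  rw [← himage]
  simp only [trace, image_image]
  rfl

namespace IsSpanningAnnulus

variable {f : ℝ × ℝ → E4}

theorem ambientIsotopic_shrink (hf : IsSpanningAnnulus f) {η : ℝ} (h0 : 0 < η) (h1 : η ≤ 1) :
    AmbientIsotopic (trace f (univ ×ˢ Icc 0 1)) (trace f (univ ×ˢ Icc 0 η)) := by
  have hscale : ∀ t ∈ Icc (0 : ℝ) 1, 1 - t + t * η ∈ Ioc (0 : ℝ) 1 := fun t ht =>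
    ⟨by nlinarith [ht.1, ht.2], by nlinarith [ht.1, ht.2]⟩
  have hisotopy := ambientIsotopic_trace_of_embedsMod (A := univ ×ˢ Icc 0 1)
    (J := fun q : ℝ × ℝ × ℝ => f (q.2.1, 0 + (1 - q.1 + q.1 * η) * q.2.2))
    (hf.contDiff.comp (by fun_prop))
    (fun t γ => periodic_of_mem_cylinderPeriods
      (f := fun p => f (p.1, 0 + (1 - t + t * η) * p.2)) fun s _ => hf.periodic s _)
    (isCompactMod_univ_prod isCompact_Icc) (fun t _ p _ => hf.norm_eq_one _)
    (fun t ht => hf.embedsMod.comp_vertical_affine (hf.contDiff.differentiable (by simp))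
      (hscale t ht).1.ne' fun y hy => ?_)
  · have htrace := trace_comp_vertical_affine f 0 η (Icc 0 1)
    simp only [zero_add] at htrace
    rw [image_mul_left_Icc h0.le zero_le_one, mul_zero, mul_one] at htrace
    simpa [htrace] using hisotopy
  · simp only [zero_add]
    exact ⟨mul_nonneg (hscale t ht).1.le hy.1,
      mul_le_one₀ (hscale t ht).2 hy.1 hy.2⟩

end IsSpanningAnnulus

/-! ### The normal framing of the upper boundary circle -/

theorem inner_fderiv_eq_zero_of_norm_eq_one {E F : Type*} [NormedAddCommGroup E] [NormedSpace ℝ E]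
    [NormedAddCommGroup F] [InnerProductSpace ℝ F] {f : E → F} (hf : Differentiable ℝ f)
    (hnorm : ∀ p, ‖f p‖ = 1) (p v : E) : inner ℝ (f p) (fderiv ℝ f p v) = 0 := by
  have hinner : fderiv ℝ (fun p => inner ℝ (f p) (f p)) p v = 0 := by
    simp [hnorm]
  rw [fderiv_inner_apply ℝ (hf p) (hf p), real_inner_comm (f p)] at hinner
  linarith

theorem inner_E4 (x y : E4) :
    inner ℝ x y = x 0 * y 0 + x 1 * y 1 + x 2 * y 2 + x 3 * y 3 := by
  simp [PiLp.inner_apply, Fin.sum_univ_four, mul_comm]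

theorem norm_sq_E4 (x : E4) : ‖x‖ ^ 2 = x 0 ^ 2 + x 1 ^ 2 + x 2 ^ 2 + x 3 ^ 2 := by
  rw [← real_inner_self_eq_norm_sq, inner_E4]
  ring

theorem exists_eq_smul_tangent {h : ℝ} (hh : h ^ 2 ≠ 1) {c w : E4} (hc : c ∈ latitudeCircle h)
    (hcw : inner ℝ c w = 0) (h2 : w 2 = 0) (h3 : w 3 = 0) :
    ∃ μ : ℝ, w = μ • !₂[-c 1, c 0, 0, 0] := by
  obtain ⟨hnorm, hc2, hc3⟩ := hc
  have hr : c 0 ^ 2 + c 1 ^ 2 = 1 - h ^ 2 := by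
    have := norm_sq_E4 c
    rw [hnorm, hc2, hc3] at this
    linarith
  have hr0 : 1 - h ^ 2 ≠ 0 := sub_ne_zero.2 hh.symm
  rw [inner_E4, h2, h3] at hcw
  let μ := (c 0 * w 1 - c 1 * w 0) / (1 - h ^ 2)
  have h0 : w 0 = μ * -c 1 := by
    rw [div_mul_eq_mul_div, eq_div_iff hr0]
    linear_combination c 0 * hcw - w 0 * hr
  have h1 : w 1 = μ * c 0 := by
    rw [div_mul_eq_mul_div, eq_div_iff hr0]
    linear_combination c 1 * hcw - w 1 * hr
  refine ⟨μ, ?_⟩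
  ext i
  fin_cases i <;> simp [h0, h1, h2, h3]

/-- The vector orthogonal to `c` with the same third and fourth coordinates as `w`, in the plane
spanned by `c` and the last two coordinate axes, when `c` lies on the circle at height `1/2`. -/
def normalLift (c w : E4) : E4 :=
  w 2 • ((4 / 3 : ℝ) • EuclideanSpace.single 2 1 - (2 / 3 : ℝ) • c) +
    w 3 • EuclideanSpace.single 3 1

theorem normalLift_apply_two {c : E4} (hc : c ∈ latitudeCircle (1 / 2)) (w : E4) :
    normalLift c w 2 = w 2 := by
  have happly : normalLift c w 2 = w 2 * (4 / 3 - 2 / 3 * c 2) := by simp [normalLift]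
  rw [happly, hc.2.1]
  ring

theorem normalLift_apply_three {c : E4} (hc : c ∈ latitudeCircle (1 / 2)) (w : E4) :
    normalLift c w 3 = w 3 := by
  simp [normalLift, hc.2.2]

theorem inner_normalLift {c : E4} (hc : c ∈ latitudeCircle (1 / 2)) (w : E4) :
    inner ℝ c (normalLift c w) = 0 := by
  have hinner : inner ℝ c (normalLift c w) = w 2 * (4 / 3 * c 2 - 2 / 3) + w 3 * c 3 := by
    simp [normalLift, inner_add_right, inner_sub_right, inner_smul_right,
      EuclideanSpace.inner_single_right, hc.1]
  rw [hinner, hc.2.1, hc.2.2]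
  ring

/-- The difference quotient `(f (s, y) - f (s, 0)) / y`, extended by the derivative to `y = 0`. -/
def boundarySlope (f : ℝ × ℝ → E4) (p : ℝ × ℝ) : E4 :=
  dslope (fun y => f (p.1, y)) 0 p.2

theorem smul_boundarySlope (f : ℝ × ℝ → E4) (p : ℝ × ℝ) :
    p.2 • boundarySlope f p = f p - f (p.1, 0) := by
  have hslope := sub_smul_dslope (fun y => f (p.1, y)) 0 p.2
  rwa [sub_zero] at hslope

theorem boundarySlope_zero {f : ℝ × ℝ → E4} (hf : Differentiable ℝ f) (s : ℝ) :
    boundarySlope f (s, 0) = fderiv ℝ f (s, 0) (0, 1) := by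
  rw [boundarySlope, dslope_same, ← fderiv_apply_one_eq_deriv, fderiv_comp_prodMk_right hf]
  rfl

theorem boundarySlope_add_two_pi {f : ℝ × ℝ → E4}
    (hf : ∀ s y, f (s + 2 * Real.pi, y) = f (s, y)) (s y : ℝ) :
    boundarySlope f (s + 2 * Real.pi, y) = boundarySlope f (s, y) := by
  simp only [boundarySlope, hf]

namespace IsSpanningAnnulus

variable {f : ℝ × ℝ → E4}

theorem differentiable (hf : IsSpanningAnnulus f) : Differentiable ℝ f :=
  hf.contDiff.differentiable (by simp)

theorem mem_zero (hf : IsSpanningAnnulus f) (s : ℝ) : f (s, 0) ∈ latitudeCircle (1 / 2) :=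
  hf.range_zero ▸ mem_range_self s

theorem injective_fderiv_zero (hf : IsSpanningAnnulus f) (s : ℝ) :
    Injective (fderiv ℝ f (s, 0)) :=
  hf.embedsMod.injective_fderiv _ ⟨mem_univ _, left_mem_Icc.2 zero_le_one⟩

theorem inner_boundarySlope (hf : IsSpanningAnnulus f) (s : ℝ) :
    inner ℝ (f (s, 0)) (boundarySlope f (s, 0)) = 0 := by
  rw [boundarySlope_zero hf.differentiable]
  exact inner_fderiv_eq_zero_of_norm_eq_one hf.differentiable hf.norm_eq_one _ _

theorem fderiv_zero_tangent (hf : IsSpanningAnnulus f) (s : ℝ) :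
    (fderiv ℝ f (s, 0) (1, 0)) 2 = 0 ∧ (fderiv ℝ f (s, 0) (1, 0)) 3 = 0 := by
  have hcurve : HasDerivAt (fun s => f (s, 0)) (fderiv ℝ f (s, 0) (1, 0)) s :=
    (hf.differentiable (s, 0)).hasFDerivAt.comp_hasDerivAt s
      ((hasDerivAt_id s).prodMk (hasDerivAt_const s (0 : ℝ)))
  have hcoord (i : Fin 4) := (EuclideanSpace.proj (𝕜 := ℝ) i).hasFDerivAt.comp_hasDerivAt s hcurve
  have h2 := hcoord 2
  have h3 := hcoord 3
  simp only [EuclideanSpace.coe_proj, comp_def, (hf.mem_zero _).2.1, (hf.mem_zero _).2.2] at h2 h3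
  exact ⟨h2.unique (hasDerivAt_const _ _), h3.unique (hasDerivAt_const _ _)⟩

/-- At `y = 0` a vanishing slope would be tangent to the circle, contradicting immersivity; for
`y ≠ 0` it would put an interior point of the annulus on its boundary circle. -/
theorem not_boundarySlope_two_eq_zero_and_three_eq_zero (hf : IsSpanningAnnulus f) (s : ℝ)
    {y : ℝ} (hy : y ∈ Icc (0 : ℝ) 1) :
    ¬(boundarySlope f (s, y) 2 = 0 ∧ boundarySlope f (s, y) 3 = 0) := by
  rintro ⟨h2, h3⟩
  rcases eq_or_ne y 0 with rfl | hy0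
  · obtain ⟨μ, hμ⟩ := exists_eq_smul_tangent (by norm_num) (hf.mem_zero s)
      (inner_fderiv_eq_zero_of_norm_eq_one hf.differentiable hf.norm_eq_one _ (1, 0))
      (hf.fderiv_zero_tangent s).1 (hf.fderiv_zero_tangent s).2
    obtain ⟨ν, hν⟩ := exists_eq_smul_tangent (by norm_num) (hf.mem_zero s)
      (hf.inner_boundarySlope s) h2 h3
    rw [boundarySlope_zero hf.differentiable] at hν
    have hinj := (injective_iff_map_eq_zero _).1 (hf.injective_fderiv_zero s)
    have hker : ν • ((1 : ℝ), (0 : ℝ)) - μ • ((0 : ℝ), (1 : ℝ)) = 0 := hinj _ (by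
      rw [map_sub, map_smul, map_smul, hμ, hν, smul_comm, sub_self])
    have hν0 : ν = 0 := by simpa using congrArg Prod.fst hker
    rw [hν0, zero_smul] at hν
    exact one_ne_zero (congrArg Prod.snd (hinj _ hν))
  · have hslope : f (s, y) = f (s, 0) + y • boundarySlope f (s, y) :=
      (add_eq_of_eq_sub' (smul_boundarySlope f (s, y))).symm
    have hmem : f (s, y) ∈ latitudeCircle (1 / 2) := by
      refine ⟨hf.norm_eq_one _, ?_, ?_⟩
      · rw [hslope, PiLp.add_apply, PiLp.smul_apply, h2, smul_zero, add_zero, (hf.mem_zero s).2.1]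
      · rw [hslope, PiLp.add_apply, PiLp.smul_apply, h3, smul_zero, add_zero, (hf.mem_zero s).2.2]
    obtain ⟨s', hs'⟩ := hf.range_zero.symm ▸ hmem
    have hperiod := hf.embedsMod.sub_mem (s', 0) ⟨mem_univ _, left_mem_Icc.2 zero_le_one⟩ (s, y)
      ⟨mem_univ _, hy⟩ hs'
    exact hy0 (by simpa using (mem_cylinderPeriods.1 hperiod).2)

end IsSpanningAnnulus

/-! ### Straightening a collar of the upper boundary circle -/

/-- The direction in which the collar leaves the point `f (s, 0)` at time `t`, evaluated at
`(t, s, y)`. At `y = 0` its last two coordinates are those of `boundarySlope f (s, t)`. -/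
def collarDirection (f : ℝ × ℝ → E4) (q : ℝ × ℝ × ℝ) : E4 :=
  (1 - q.1) • boundarySlope f q.2 + normalLift (f (q.2.1, 0))
    (boundarySlope f (q.2.1, q.1) - (1 - q.1) • boundarySlope f (q.2.1, 0))

/-- The collar at time `t`, before projection to the sphere: `f` itself at `t = 0` and a band ruled
by straight segments at `t = 1`. -/
def straightening (f : ℝ × ℝ → E4) (q : ℝ × ℝ × ℝ) : E4 :=
  f (q.2.1, 0) + q.2.2 • collarDirection f q

/-- The band in `S³` with upper boundary `latitudeCircle (1 / 2)` obtained by projecting the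
segments from `c` to `c + η • ((2 / 3) • c - (4 / 3) • e₂)`, whose direction is `normalLift c w`
for `w 2 = -1` and `w 3 = 0`. Here `e₂` is the third coordinate vector. -/
def modelBand (η : ℝ) : Set S3 :=
  {z | ∃ c ∈ latitudeCircle (1 / 2), ∃ y ∈ Icc 0 η,
    smoothNormalize (c + y • ((2 / 3 : ℝ) • c - (4 / 3 : ℝ) • EuclideanSpace.single 2 1)) =
      (z : E4)}

theorem straightening_add_two_pi {f : ℝ × ℝ → E4}
    (hf : ∀ s y, f (s + 2 * Real.pi, y) = f (s, y)) (t s y : ℝ) :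
    straightening f (t, s + 2 * Real.pi, y) = straightening f (t, s, y) := by
  simp only [straightening, collarDirection, boundarySlope_add_two_pi hf, hf]

theorem straightening_zero_left (f : ℝ × ℝ → E4) (p : ℝ × ℝ) : straightening f (0, p) = f p := by
  have hlift : normalLift (f (p.1, 0)) 0 = 0 := by simp [normalLift]
  simp [straightening, collarDirection, smul_boundarySlope, hlift]

theorem straightening_boundary (f : ℝ × ℝ → E4) (t s : ℝ) :
    straightening f (t, s, 0) = f (s, 0) := by
  simp [straightening]

theorem univ_prod_Icc_subset_thickening {ε η : ℝ} (hη : η < ε) :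
    univ ×ˢ Icc 0 η ⊆ thickening ε ((univ : Set ℝ) ×ˢ {(0 : ℝ)}) := by
  rintro ⟨s, y⟩ ⟨-, hy⟩
  refine mem_thickening_iff.2 ⟨(s, 0), ⟨mem_univ _, rfl⟩, ?_⟩
  rw [Prod.dist_eq, dist_self, Real.dist_0_eq_abs, abs_of_nonneg hy.1]
  exact max_lt ((hy.1.trans hy.2).trans_lt hη) (hy.2.trans_lt hη)

namespace IsSpanningAnnulus

variable {f : ℝ × ℝ → E4}

theorem contDiff_collarDirection (hf : IsSpanningAnnulus f) :
    ContDiff ℝ ∞ (collarDirection f) := by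
  have hslope : ContDiff ℝ ∞ (boundarySlope f) := contDiff_dslope_zero hf.contDiff
  have hfade : ContDiff ℝ ∞ fun q : ℝ × ℝ × ℝ => 1 - q.1 := by fun_prop
  have hslope' : ContDiff ℝ ∞ fun q : ℝ × ℝ × ℝ =>
      boundarySlope f (q.2.1, q.1) - (1 - q.1) • boundarySlope f (q.2.1, 0) :=
    (hslope.comp (by fun_prop)).sub
      (hfade.smul (hslope.comp (by fun_prop : ContDiff ℝ ∞ fun q : ℝ × ℝ × ℝ => (q.2.1, (0 : ℝ)))))
  have hlift : ContDiff ℝ ∞ fun z : E4 × E4 => normalLift z.1 z.2 := by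
    unfold normalLift
    fun_prop
  exact (hfade.smul (hslope.comp contDiff_snd)).add
    (hlift.comp ((hf.contDiff.comp (by fun_prop)).prodMk hslope'))

theorem contDiff_straightening (hf : IsSpanningAnnulus f) : ContDiff ℝ ∞ (straightening f) :=
  (hf.contDiff.comp (by fun_prop)).add
    ((contDiff_snd.comp contDiff_snd).smul hf.contDiff_collarDirection)

theorem straightening_one_left (hf : IsSpanningAnnulus f) (s y : ℝ) :
    straightening f (1, s, y) = f (s, 0) +
      y • ((2 / 3 : ℝ) • f (s, 0) - (4 / 3 : ℝ) • EuclideanSpace.single 2 1) := by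
  have hslope : boundarySlope f (s, 1) = f (s, 1) - f (s, 0) := by
    simpa using smul_boundarySlope f (s, 1)
  have h2 : boundarySlope f (s, 1) 2 = -1 := by
    rw [hslope, PiLp.sub_apply, (hf.mem_one s).2.1, (hf.mem_zero s).2.1]
    norm_num
  have h3 : boundarySlope f (s, 1) 3 = 0 := by
    rw [hslope, PiLp.sub_apply, (hf.mem_one s).2.2, (hf.mem_zero s).2.2, sub_zero]
  simp [straightening, collarDirection, normalLift, h2, h3]

theorem collarDirection_boundary (hf : IsSpanningAnnulus f) (t s : ℝ) :
    inner ℝ (f (s, 0)) (collarDirection f (t, s, 0)) = 0 ∧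
      collarDirection f (t, s, 0) 2 = boundarySlope f (s, t) 2 ∧
      collarDirection f (t, s, 0) 3 = boundarySlope f (s, t) 3 := by
  have hc := hf.mem_zero s
  refine ⟨?_, ?_, ?_⟩
  · simp [collarDirection, inner_add_right, inner_smul_right, hf.inner_boundarySlope,
      inner_normalLift hc]
  · simp [collarDirection, normalLift_apply_two hc]
  · simp [collarDirection, normalLift_apply_three hc]

theorem hasFDerivAt_straightening_boundary (hf : IsSpanningAnnulus f) (t s : ℝ) :
    HasFDerivAt (fun p => straightening f (t, p))
      ((fderiv ℝ f (s, 0)).comp ((ContinuousLinearMap.fst ℝ ℝ ℝ).prod 0) +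
        (ContinuousLinearMap.snd ℝ ℝ ℝ).smulRight (collarDirection f (t, s, 0))) (s, 0) := by
  have hcircle : HasFDerivAt (fun p : ℝ × ℝ => f (p.1, 0))
      ((fderiv ℝ f (s, 0)).comp ((ContinuousLinearMap.fst ℝ ℝ ℝ).prod 0)) (s, 0) :=
    (hf.differentiable (s, 0)).hasFDerivAt.comp (s, 0)
      (hasFDerivAt_fst.prodMk (hasFDerivAt_const 0 (s, 0)))
  have hdir : HasFDerivAt (fun p : ℝ × ℝ => collarDirection f (t, p)) _ (s, 0) :=
    ((hf.contDiff_collarDirection.differentiable (by simp)).comp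
      (by fun_prop : Differentiable ℝ fun p : ℝ × ℝ => (t, p)) (s, 0)).hasFDerivAt
  simpa using! hcircle.add (hasFDerivAt_snd.smul hdir)

theorem injective_fderiv_smoothNormalize_straightening (hf : IsSpanningAnnulus f) {t : ℝ}
    (ht : t ∈ Icc (0 : ℝ) 1) (s : ℝ) :
    Injective (fderiv ℝ (fun p => smoothNormalize (straightening f (t, p))) (s, 0)) := by
  have hZ := hf.hasFDerivAt_straightening_boundary t s
  have hnormalize : Differentiable ℝ (smoothNormalize : E4 → E4) :=
    contDiff_smoothNormalize.differentiable (by simp)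
  have hcomp := (hnormalize _).hasFDerivAt.comp (s, (0 : ℝ)) hZ
  rw [HasFDerivAt.fderiv (f := fun p => smoothNormalize (straightening f (t, p))) hcomp,
    injective_iff_map_eq_zero]
  rintro ⟨a, b⟩ hab
  obtain ⟨m, hm⟩ := exists_eq_smul_of_fderiv_smoothNormalize_eq_zero hab
  obtain ⟨hperp, h2, h3⟩ := hf.collarDirection_boundary t s
  have hnorm := hf.norm_eq_one (s, 0)
  have hcc : inner ℝ (f (s, 0)) (f (s, 0)) = (1 : ℝ) := by
    rw [real_inner_self_eq_norm_sq, hnorm, one_pow]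
  replace hm : fderiv ℝ f (s, 0) (a, 0) + b • collarDirection f (t, s, 0) = m • f (s, 0) := by
    simpa [straightening, smoothNormalize_of_norm_eq_one hnorm] using hm
  have htangent : fderiv ℝ f (s, 0) (a, 0) = a • fderiv ℝ f (s, 0) (1, 0) := by
    rw [← map_smul, Prod.smul_mk, smul_eq_mul, mul_one, smul_zero]
  have hm0 : m = 0 := by
    have hinner := congrArg (inner ℝ (f (s, 0))) hm
    rw [inner_add_right, inner_smul_right, inner_smul_right, hperp, hcc,
      inner_fderiv_eq_zero_of_norm_eq_one hf.differentiable hf.norm_eq_one] at hinner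
    linarith
  have hb : b = 0 := by
    by_contra hb
    refine hf.not_boundarySlope_two_eq_zero_and_three_eq_zero s ht ⟨?_, ?_⟩
    · simpa [htangent, hm0, (hf.fderiv_zero_tangent s).1, h2, hb] using congrArg (· 2) hm
    · simpa [htangent, hm0, (hf.fderiv_zero_tangent s).2, h3, hb] using congrArg (· 3) hm
  rw [hm0, hb, zero_smul, zero_smul, add_zero] at hm
  rw [hb]
  exact (injective_iff_map_eq_zero _).1 (hf.injective_fderiv_zero s) _ hm

theorem embedsMod_smoothNormalize_straightening (hf : IsSpanningAnnulus f) {t : ℝ}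
    (ht : t ∈ Icc (0 : ℝ) 1) :
    EmbedsMod cylinderPeriods (univ ×ˢ {0})
      fun p => smoothNormalize (straightening f (t, p)) where
  injective_fderiv := by
    rintro ⟨s, _⟩ ⟨-, rfl⟩
    exact hf.injective_fderiv_smoothNormalize_straightening ht s
  sub_mem := by
    rintro ⟨s, _⟩ ⟨-, rfl⟩ ⟨s', _⟩ ⟨-, rfl⟩ heq
    simp only [straightening_boundary, smoothNormalize_of_norm_eq_one (hf.norm_eq_one _)] at heq
    exact hf.embedsMod.sub_mem _ ⟨mem_univ _, left_mem_Icc.2 zero_le_one⟩ _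
      ⟨mem_univ _, left_mem_Icc.2 zero_le_one⟩ heq

theorem trace_straightening_one (hf : IsSpanningAnnulus f) (η : ℝ) :
    trace (fun p => smoothNormalize (straightening f (1, p))) (univ ×ˢ Icc 0 η) = modelBand η := by
  ext z
  simp only [trace, modelBand, mem_ofPred_eq, ← hf.range_zero, exists_range_iff]
  constructor
  · rintro ⟨⟨s, y⟩, ⟨-, hy⟩, hz⟩
    exact ⟨s, y, hy, (congrArg smoothNormalize (hf.straightening_one_left s y)).symm.trans hz⟩
  · rintro ⟨s, y, hy, hz⟩
    exact ⟨(s, y), ⟨mem_univ _, hy⟩,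
      (congrArg smoothNormalize (hf.straightening_one_left s y)).trans hz⟩

theorem exists_thickening_norm_straightening (hf : IsSpanningAnnulus f) :
    ∃ ε > 0, ∀ t ∈ Icc (0 : ℝ) 1, ∀ p ∈ thickening ε (univ ×ˢ {0}),
      1 / 2 < ‖straightening f (t, p)‖ ^ 2 := by
  refine (isCompactMod_univ_prod isCompact_singleton).exists_forall_thickening isCompact_Icc
    (fun t p γ hγ => ?_) fun t _ p hp => ?_
  · have hp : straightening f (t, p + γ) = straightening f (t, p) :=
      periodic_of_mem_cylinderPeriods (f := fun p => straightening f (t, p))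
        (straightening_add_two_pi hf.periodic t) hγ p
    rw [hp]
    exact id
  · obtain ⟨s, _⟩ := p
    obtain rfl : _ = (0 : ℝ) := hp.2
    refine (isOpen_lt continuous_const (hf.contDiff_straightening.continuous.norm.pow 2)).mem_nhds
      (show _ < ‖straightening f (t, s, 0)‖ ^ 2 from ?_)
    rw [straightening_boundary, hf.norm_eq_one]
    norm_num

theorem eventually_ambientIsotopic_straighten (hf : IsSpanningAnnulus f) :
    ∀ᶠ η in 𝓝[>] (0 : ℝ), AmbientIsotopic (trace f (univ ×ˢ Icc 0 η)) (modelBand η) := by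
  have hJ : ContDiff ℝ ∞ fun q => smoothNormalize (straightening f q) :=
    contDiff_smoothNormalize.comp hf.contDiff_straightening
  have hper : ∀ t, ∀ γ ∈ cylinderPeriods,
      Periodic (fun p => smoothNormalize (straightening f (t, p))) γ := fun t γ =>
    periodic_of_mem_cylinderPeriods (f := fun p => smoothNormalize (straightening f (t, p)))
      fun s y => congrArg smoothNormalize (straightening_add_two_pi hf.periodic t s y)
  obtain ⟨ε₁, hε₁, hnorm⟩ := hf.exists_thickening_norm_straightening
  obtain ⟨ε₂, hε₂, hembeds⟩ := EmbedsMod.exists_thickening hJ hper isCompact_Icc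
    (isCompactMod_univ_prod isCompact_singleton)
    fun t ht => hf.embedsMod_smoothNormalize_straightening ht
  filter_upwards [Ioo_mem_nhdsGT (lt_min hε₁ hε₂)] with η hη
  have hisotopy := ambientIsotopic_trace_of_embedsMod (A := univ ×ˢ Icc 0 η) hJ hper
    (isCompactMod_univ_prod isCompact_Icc)
    (fun t ht p hp => norm_smoothNormalize (hnorm t ht p
      (univ_prod_Icc_subset_thickening (hη.2.trans_le (min_le_left _ _)) hp)).le)
    (fun t ht => (hembeds t ht).mono
      (univ_prod_Icc_subset_thickening (hη.2.trans_le (min_le_right _ _))))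
  rw [hf.trace_straightening_one] at hisotopy
  simpa only [straightening_zero_left, smoothNormalize_of_norm_eq_one (hf.norm_eq_one _)]
    using hisotopy

theorem eventually_ambientIsotopic_modelBand (hf : IsSpanningAnnulus f) :
    ∀ᶠ η in 𝓝[>] (0 : ℝ), AmbientIsotopic (trace f (univ ×ˢ Icc 0 1)) (modelBand η) := by
  filter_upwards [hf.eventually_ambientIsotopic_straighten, Ioc_mem_nhdsGT one_pos] with η h hη
  exact (hf.ambientIsotopic_shrink hη.1 hη.2).trans h

end IsSpanningAnnulus

/-! ### The standard annulus -/

/-- The point of the equatorial sphere `x₄ = 0` with longitude `p.1` and latitude `p.2`. -/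
def equatorialPoint (p : ℝ × ℝ) : E4 :=
  !₂[Real.cos p.2 * Real.cos p.1, Real.cos p.2 * Real.sin p.1, Real.sin p.2, 0]

theorem contDiff_equatorialPoint : ContDiff ℝ ∞ equatorialPoint := by
  refine contDiff_euclidean.2 fun i => ?_
  fin_cases i <;> simp only [equatorialPoint, Fin.reduceFinMk, Matrix.cons_val] <;> fun_prop

theorem norm_equatorialPoint (p : ℝ × ℝ) : ‖equatorialPoint p‖ = 1 := by
  have hsq : ‖equatorialPoint p‖ ^ 2 = 1 := by
    simp only [norm_sq_E4, equatorialPoint, Fin.isValue, Matrix.cons_val]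
    linear_combination Real.cos p.2 ^ 2 * Real.sin_sq_add_cos_sq p.1 + Real.sin_sq_add_cos_sq p.2
  exact (pow_eq_one_iff_of_nonneg (norm_nonneg _) two_ne_zero).1 hsq

theorem injective_fderiv_equatorialPoint {p : ℝ × ℝ} (hp : 0 < Real.cos p.2) :
    Injective (fderiv ℝ equatorialPoint p) := by
  have hcoord : ∀ (i : Fin 4) {L : ℝ × ℝ →L[ℝ] ℝ}, HasFDerivAt (equatorialPoint · i) L p →
      ∀ v, fderiv ℝ equatorialPoint p v i = L v := fun i L hL v => by
    have hproj := (EuclideanSpace.proj i : E4 →L[ℝ] ℝ).hasFDerivAt.comp p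
      (contDiff_equatorialPoint.differentiable (by simp) p).hasFDerivAt
    exact DFunLike.congr_fun (hproj.unique hL) v
  have hcos := (hasFDerivAt_fst (𝕜 := ℝ) (p := p)).cos
  have hsin := (hasFDerivAt_fst (𝕜 := ℝ) (p := p)).sin
  have hcos' := (hasFDerivAt_snd (𝕜 := ℝ) (p := p)).cos
  rw [injective_iff_map_eq_zero]
  rintro ⟨a, b⟩ hab
  obtain rfl : b = 0 := by
    simpa [hab, hp.ne'] using (hcoord 2 (hasFDerivAt_snd (𝕜 := ℝ) (p := p)).sin (a, b)).symm
  have hsina : Real.sin p.1 * a = 0 := by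
    simpa [hab, hp.ne'] using (hcoord 0 (hcos'.mul hcos) (a, 0)).symm
  have hcosa : Real.cos p.1 * a = 0 := by
    simpa [hab, hp.ne'] using (hcoord 1 (hcos'.mul hsin) (a, 0)).symm
  have ha : a = 0 := by
    linear_combination Real.sin p.1 * hsina + Real.cos p.1 * hcosa
      - a * Real.sin_sq_add_cos_sq p.1
  rw [ha, Prod.mk_zero_zero]

theorem embedsMod_equatorialPoint :
    EmbedsMod cylinderPeriods (univ ×ˢ Ioo (-(Real.pi / 2)) (Real.pi / 2)) equatorialPoint where
  injective_fderiv p hp := injective_fderiv_equatorialPoint (Real.cos_pos_of_mem_Ioo hp.2)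
  sub_mem := by
    rintro ⟨s, θ⟩ ⟨-, hθ⟩ ⟨s', θ'⟩ ⟨-, hθ'⟩ heq
    obtain rfl : θ = θ' := Real.injOn_sin (Ioo_subset_Icc_self hθ) (Ioo_subset_Icc_self hθ')
      (congrArg (· 2) heq)
    have hcos : Real.cos θ ≠ 0 := (Real.cos_pos_of_mem_Ioo hθ).ne'
    obtain ⟨k, hk⟩ := Real.Angle.angle_eq_iff_two_pi_dvd_sub.1 (Real.Angle.cos_sin_inj
      (mul_left_cancel₀ hcos (congrArg (· 0) heq)) (mul_left_cancel₀ hcos (congrArg (· 1) heq)))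
    refine mem_cylinderPeriods.2 ⟨⟨-k, ?_⟩, sub_self θ⟩
    push_cast
    simp only [Prod.fst_sub] at hk ⊢
    linear_combination -hk

theorem range_equatorialPoint {θ : ℝ} (hθ : 0 ≤ Real.cos θ) :
    range (fun s => equatorialPoint (s, θ)) = latitudeCircle (Real.sin θ) := by
  refine Subset.antisymm (range_subset_iff.2 fun s => ⟨norm_equatorialPoint _, rfl, rfl⟩) ?_
  rintro x ⟨hx, h2, h3⟩
  have hnorm : ‖(⟨x 0, x 1⟩ : ℂ)‖ = Real.cos θ := by
    rw [← sq_eq_sq₀ (norm_nonneg _) hθ, ← Complex.normSq_eq_norm_sq, Complex.normSq_mk]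
    have hsum := norm_sq_E4 x
    rw [hx, h2, h3] at hsum
    linear_combination -hsum - Real.sin_sq_add_cos_sq θ
  refine ⟨Complex.arg ⟨x 0, x 1⟩, ?_⟩
  ext i
  fin_cases i
  · simpa [equatorialPoint, hnorm] using Complex.norm_mul_cos_arg ⟨x 0, x 1⟩
  · simpa [equatorialPoint, hnorm] using Complex.norm_mul_sin_arg ⟨x 0, x 1⟩
  · simp [equatorialPoint, h2]
  · simp [equatorialPoint, h3]

theorem Icc_neg_pi_div_six_subset :
    Icc (-(Real.pi / 6)) (Real.pi / 6) ⊆ Ioo (-(Real.pi / 2)) (Real.pi / 2) :=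
  Icc_subset_Ioo (by linarith [Real.pi_pos]) (by linarith [Real.pi_pos])

theorem image_sin_Icc_neg_pi_div_six :
    Real.sin '' Icc (-(Real.pi / 6)) (Real.pi / 6) = Icc (-1 / 2) (1 / 2) := by
  rw [Real.continuous_sin.continuousOn.image_Icc_of_monotoneOn (by linarith [Real.pi_pos])
    (Real.strictMonoOn_sin.monotoneOn.mono (Icc_neg_pi_div_six_subset.trans Ioo_subset_Icc_self)),
    Real.sin_neg, Real.sin_pi_div_six, neg_div]

theorem trace_equatorialPoint :
    trace equatorialPoint (univ ×ˢ Icc (-(Real.pi / 6)) (Real.pi / 6)) = stdAnnulus := by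
  ext z
  constructor
  · rintro ⟨⟨s, θ⟩, ⟨-, hθ⟩, hz⟩
    exact ⟨congrArg (· 3) hz.symm, image_sin_Icc_neg_pi_div_six.subset
      ⟨θ, hθ, congrArg (· 2) hz⟩⟩
  · rintro ⟨h3, h2⟩
    rw [← image_sin_Icc_neg_pi_div_six] at h2
    obtain ⟨θ, hθ, h2⟩ := h2
    obtain ⟨s, hs⟩ := (range_equatorialPoint
      (Real.cos_pos_of_mem_Ioo (Icc_neg_pi_div_six_subset hθ)).le).ge
      ⟨norm_eq_of_mem_sphere z, h2.symm, h3⟩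
    exact ⟨(s, θ), ⟨mem_univ _, hθ⟩, hs⟩

theorem image_affine_Icc_of_nonpos {α β a b : ℝ} (hβ : β ≤ 0) (hab : a ≤ b) :
    (fun y => α + β * y) '' Icc a b = Icc (α + β * b) (α + β * a) :=
  ContinuousOn.image_Icc_of_antitoneOn hab (by fun_prop) fun _ _ _ _ hxy =>
    add_le_add_right (mul_le_mul_of_nonpos_left hxy hβ) α

/-- The parametrization of the standard annulus by longitude and rescaled latitude. -/
def stdParam (p : ℝ × ℝ) : E4 :=
  equatorialPoint (p.1, Real.pi / 6 + -(Real.pi / 3) * p.2)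

theorem image_stdParam_latitude :
    (fun y => Real.pi / 6 + -(Real.pi / 3) * y) '' Icc 0 1 =
      Icc (-(Real.pi / 6)) (Real.pi / 6) := by
  rw [image_affine_Icc_of_nonpos (by linarith [Real.pi_pos]) zero_le_one]
  congr 1 <;> ring

theorem trace_stdParam : trace stdParam (univ ×ˢ Icc 0 1) = stdAnnulus :=
  (trace_comp_vertical_affine _ _ _ _).trans
    (by rw [image_stdParam_latitude, trace_equatorialPoint])

theorem isSpanningAnnulus_stdParam : IsSpanningAnnulus stdParam where
  contDiff := contDiff_equatorialPoint.comp (by fun_prop)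
  norm_eq_one p := norm_equatorialPoint _
  periodic s y := by simp [stdParam, equatorialPoint]
  embedsMod := embedsMod_equatorialPoint.comp_vertical_affine
    (contDiff_equatorialPoint.differentiable (by simp)) (neg_ne_zero.2 (by positivity))
    ((mapsTo_image _ _).mono_right
      (image_stdParam_latitude.trans_subset Icc_neg_pi_div_six_subset))
  range_zero := by
    simpa [stdParam] using range_equatorialPoint (θ := Real.pi / 6)
      (by rw [Real.cos_pi_div_six]; positivity)
  mem_one s := by
    have hangle : Real.pi / 6 + -(Real.pi / 3) * 1 = -(Real.pi / 6) := by ring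
    have hlatitude : Real.sin (Real.pi / 6 + -(Real.pi / 3) * 1) = -(1 / 2) := by
      rw [hangle, Real.sin_neg, Real.sin_pi_div_six]
    exact ⟨norm_equatorialPoint _, hlatitude, rfl⟩

/-! ### Annuli with the boundary of the standard annulus -/

theorem eq_and_eq_or_eq_and_eq_of_union_eq_union {X : Type*} [TopologicalSpace X] {C D S T : Set X}
    (hS : IsPreconnected S) (hT : IsPreconnected T) (hC : IsClosed C) (hD : IsClosed D)
    (hCD : Disjoint C D) (hCne : C.Nonempty) (hDne : D.Nonempty) (h : S ∪ T = C ∪ D) :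
    S = C ∧ T = D ∨ S = D ∧ T = C := by
  have hsplit : ∀ {U : Set X}, IsPreconnected U → U ⊆ C ∪ D → U ⊆ C ∨ U ⊆ D := fun hU hsub =>
    isPreconnected_iff_subset_of_disjoint_closed.1 hU C D hC hD hsub
      (by rw [hCD.inter_eq, inter_empty])
  have hS' := hsplit hS (h ▸ subset_union_left)
  have hT' := hsplit hT (h ▸ subset_union_right)
  obtain ⟨c, hc⟩ := hCne
  obtain ⟨d, hd⟩ := hDne
  rw [disjoint_left] at hCD
  simp only [Set.ext_iff, mem_union] at h ⊢
  rcases hS' with hS' | hS' <;> rcases hT' with hT' | hT' <;> grind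

theorem isClosed_latitudeCircle (h : ℝ) : IsClosed (latitudeCircle h) := by
  refine (isClosed_eq continuous_norm continuous_const).inter
    ((isClosed_eq ?_ continuous_const).inter (isClosed_eq ?_ continuous_const)) <;> fun_prop

theorem disjoint_latitudeCircle {h h' : ℝ} (hne : h ≠ h') :
    Disjoint (latitudeCircle h) (latitudeCircle h') :=
  disjoint_left.2 fun _ hx hx' => hne (hx.2.1.symm.trans hx'.2.1)

theorem image_coe_stdAnnulusBdry :
    ((↑) : S3 → E4) '' stdAnnulusBdry = latitudeCircle (1 / 2) ∪ latitudeCircle (-(1 / 2)) := by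
  ext x
  constructor
  · rintro ⟨z, ⟨h3, h2 | h2⟩, rfl⟩
    exacts [Or.inl ⟨norm_eq_of_mem_sphere z, h2, h3⟩, Or.inr ⟨norm_eq_of_mem_sphere z, h2, h3⟩]
  · rintro (⟨hx, h2, h3⟩ | ⟨hx, h2, h3⟩)
    exacts [⟨⟨x, mem_sphere_zero_iff_norm.2 hx⟩, ⟨h3, Or.inl h2⟩, rfl⟩,
      ⟨⟨x, mem_sphere_zero_iff_norm.2 hx⟩, ⟨h3, Or.inr h2⟩, rfl⟩]

namespace EmbeddedAnnulus

variable (A : EmbeddedAnnulus)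

theorem contMDiff_coe : ContMDiff 𝓘(ℝ, ℝ × ℝ) 𝓘(ℝ, E4) ∞ fun p => (A.F p : E4) :=
  contMDiff_coe_sphere.comp A.smooth

theorem injective_fderiv_coe {p : ℝ × ℝ} (hp : p.2 ∈ Icc (0 : ℝ) 1) :
    Injective (fderiv ℝ (fun p => (A.F p : E4)) p) := by
  have hF : MDifferentiableAt 𝓘(ℝ, ℝ × ℝ) (𝓡 3) A.F p := A.smooth.mdifferentiableAt (by simp)
  have hcoe : MDifferentiableAt (𝓡 3) 𝓘(ℝ, E4) (fun x : S3 => (x : E4)) (A.F p) :=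
    contMDiff_coe_sphere.mdifferentiableAt (n := ∞) (by simp)
  have hchain : fderiv ℝ (fun p => (A.F p : E4)) p = _ :=
    mfderiv_eq_fderiv.symm.trans (mfderiv_comp p hcoe hF)
  rw [hchain]
  exact (injective_mvfderiv_subtypeVal_sphere (n := 3) (A.F p)).comp (A.immersion p hp)

theorem embedsMod_coe : EmbedsMod cylinderPeriods (univ ×ˢ Icc 0 1) fun p => (A.F p : E4) where
  injective_fderiv p hp := A.injective_fderiv_coe hp.2
  sub_mem := by
    rintro ⟨s, y⟩ ⟨-, hy⟩ ⟨s', y'⟩ ⟨-, hy'⟩ heq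
    obtain ⟨rfl, k, rfl⟩ := (A.inj s s' y y' hy hy').1 (Subtype.ext heq)
    exact mem_cylinderPeriods.2 ⟨⟨k, by simp [mul_comm]⟩, sub_self y⟩

theorem trace_coe : trace (fun p => (A.F p : E4)) (univ ×ˢ Icc 0 1) = A.carrier := by
  ext z
  simp only [trace, carrier, mem_image, mem_ofPred_eq, Subtype.coe_inj]

theorem image_coe_bdry : ((↑) : S3 → E4) '' A.bdry =
    range (fun s => (A.F (s, 0) : E4)) ∪ range fun s => (A.F (s, 1) : E4) := by
  ext x
  simp [bdry, or_and_right, exists_or]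

theorem range_boundary_eq (hA : A.bdry = stdAnnulusBdry) :
    range (fun s => (A.F (s, 0) : E4)) = latitudeCircle (1 / 2) ∧
        range (fun s => (A.F (s, 1) : E4)) = latitudeCircle (-(1 / 2)) ∨
      range (fun s => (A.F (s, 0) : E4)) = latitudeCircle (-(1 / 2)) ∧
        range (fun s => (A.F (s, 1) : E4)) = latitudeCircle (1 / 2) := by
  have hconn : ∀ y, IsPreconnected (range fun s => (A.F (s, y) : E4)) := fun y =>
    isPreconnected_range (A.contMDiff_coe.continuous.comp (by fun_prop))
  refine eq_and_eq_or_eq_and_eq_of_union_eq_union (hconn 0) (hconn 1)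
    (isClosed_latitudeCircle _) (isClosed_latitudeCircle _) (disjoint_latitudeCircle (by norm_num))
    (isSpanningAnnulus_stdParam.range_zero ▸ range_nonempty _)
    ⟨_, isSpanningAnnulus_stdParam.mem_one 0⟩ ?_
  rw [← image_coe_bdry, hA, image_coe_stdAnnulusBdry]

theorem exists_isSpanningAnnulus (hA : A.bdry = stdAnnulusBdry) :
    ∃ f, IsSpanningAnnulus f ∧ trace f (univ ×ˢ Icc 0 1) = A.carrier := by
  have hperiodic : ∀ s y, (A.F (s + 2 * Real.pi, y) : E4) = A.F (s, y) := fun s y => by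
    rw [A.periodic]
  rcases A.range_boundary_eq hA with ⟨h0, h1⟩ | ⟨h0, h1⟩
  · exact ⟨fun p => A.F p, ⟨A.contMDiff_coe.contDiff, fun p => norm_eq_of_mem_sphere _, hperiodic,
      A.embedsMod_coe, h0, fun s => h1 ▸ mem_range_self s⟩, A.trace_coe⟩
  · have hflip : (fun y : ℝ => 1 + -1 * y) '' Icc 0 1 = Icc 0 1 := by
      rw [image_affine_Icc_of_nonpos (by norm_num) zero_le_one]
      norm_num
    refine ⟨fun p => A.F (p.1, 1 + -1 * p.2), ⟨A.contMDiff_coe.contDiff.comp (by fun_prop),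
      fun p => norm_eq_of_mem_sphere _, fun s y => hperiodic s _,
      A.embedsMod_coe.comp_vertical_affine (A.contMDiff_coe.contDiff.differentiable (by simp))
        (by norm_num) ((mapsTo_image _ _).mono_right hflip.subset),
      by simpa using h1, fun s => ?_⟩, ?_⟩
    · rw [mul_one, add_neg_cancel, ← h0]
      exact mem_range_self s
    · rw [trace_comp_vertical_affine (fun p => (A.F p : E4)), hflip, trace_coe]

end EmbeddedAnnulus

/-- If `A'` is any smoothly embedded annulus in `S³` whose boundary
equals the boundary `∂A₀` of the standard unknotted annulus `A₀`, then there is a smooth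
ambient isotopy of `S³` sending `A₀` to `A'`. -/
theorem standard_annulus_ambient_isotopic_of_same_boundary
    (A' : EmbeddedAnnulus) (hbd : A'.bdry = stdAnnulusBdry) :
    ∃ h : AmbientIsotopy, h.Sends stdAnnulus A'.carrier := by
  obtain ⟨f, hf, hcarrier⟩ := A'.exists_isSpanningAnnulus hbd
  obtain ⟨η, hstd, hA'⟩ := (isSpanningAnnulus_stdParam.eventually_ambientIsotopic_modelBand.and
    hf.eventually_ambientIsotopic_modelBand).exists
  rw [trace_stdParam] at hstd
  rw [hcarrier] at hA'
  exact hstd.trans hA'.symm
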